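/- arXiv:1604.07293 — 2 statements merged into one kernel-verified Lean document; each statement's English description precedes it below -/
import Mathlib

section
/- Under the Setup, if T has finite topological entropy, i.e. h_top(T) < ∞, then mdim(T) = 0. -/
open MeasureTheory Set Filter Topology
open scoped ENNReal

section Defs

variable {Ω X Y : Type*}

/-- The fiber of a set `E ⊆ Ω × X` over `ω`. -/
def fiber (E : Set (Ω × X)) (ω : Ω) : Set X := {x | (ω, x) ∈ E}

/-- The iterates `T^n_ω = T_{θ^{n-1}ω} ∘ ⋯ ∘ T_ω` of a bundle RDS. -/
def itr (T : Ω → X → X) (θ : Ω → Ω) : ℕ → Ω → X → X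
  | 0, _ => id
  | n + 1, ω => itr T θ n (θ ω) ∘ T ω

/-- Two families of sets with common index set are combinatorially equivalent if
the corresponding sub-intersections are simultaneously nonempty. -/
def CombEquiv {ι : Type*} (A B : ι → Set Y) : Prop :=
  ∀ J : Set ι, (⋂ i ∈ J, A i).Nonempty ↔ (⋂ i ∈ J, B i).Nonempty

section Top

variable [TopologicalSpace X] [TopologicalSpace Y]

/-- A family of open sets covering the whole space. -/
def IsOpenCover {ι : Type*} (U : ι → Set X) : Prop :=
  (∀ i, IsOpen (U i)) ∧ (⋃ i, U i) = univ

/-- A family of relatively open subsets of `K` covering `K`. -/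
def IsOpenCoverOn (K : Set X) {ι : Type*} (U : ι → Set X) : Prop :=
  (∀ i, ∃ V : Set X, IsOpen V ∧ U i = V ∩ K) ∧ K ⊆ ⋃ i, U i

/-- `1 + ord`: the maximal multiplicity `sup_{x ∈ K} Σ_i 1_{U i}(x)` of the family `U` on `K`. -/
noncomputable def multOn (K : Set X) {ι : Type*} [Fintype ι] (U : ι → Set X) : ℕ :=
  sSup {m | ∃ x ∈ K, m = Nat.card {i // x ∈ U i}}

/-- `ord(U) = -1 + sup_{x ∈ K} Σ_i 1_{U i}(x)` (as a truncated natural number). -/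
noncomputable def ordOn (K : Set X) {ι : Type*} [Fintype ι] (U : ι → Set X) : ℕ :=
  multOn K U - 1

/-- `V` refines `U` if every member of `V` is contained in some member of `U`. -/
def Refines {ι κ : Type*} (V : κ → Set X) (U : ι → Set X) : Prop :=
  ∀ j, ∃ i, V j ⊆ U i

/-- `D(U) = min { ord(V) : V a finite relatively open cover of K refining U }`. -/
noncomputable def DOn (K : Set X) {ι : Type*} [Fintype ι] (U : ι → Set X) : ℕ :=
  sInf {q | ∃ (m : ℕ) (V : Fin m → Set X),
    IsOpenCoverOn K V ∧ Refines V U ∧ ordOn K V = q}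

/-- `f : X → Y` is `U`-compatible if some finite open cover of `Y` pulls back to
a refinement of `U`. -/
def Compatible {ι : Type*} (U : ι → Set X) (f : X → Y) : Prop :=
  ∃ (m : ℕ) (W : Fin m → Set Y), IsOpenCover W ∧ Refines (fun j => f ⁻¹' (W j)) U

/-- The covering dimension `dim Y = sup { D(V) : V a finite open cover of Y }`. -/
noncomputable def covDim (Z : Type*) [TopologicalSpace Z] : ℕ∞ :=
  ⨆ (m : ℕ) (V : Fin m → Set Z) (_ : IsOpenCover V), (DOn (univ : Set Z) V : ℕ∞)

/-- The dynamical cover `α_0^{n-1}(ω|E) = ⋁_{i=0}^{n-1} (T^i_ω)⁻¹ α(θ^i ω|E)` of the fiber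
`E_ω`, indexed by `Fin n → ι`. -/
def dynCover (T : Ω → X → X) (θ : Ω → Ω) (E : Set (Ω × X)) {ι : Type*}
    (U : ι → Set X) (n : ℕ) (ω : Ω) : (Fin n → ι) → Set X :=
  fun j => fiber E ω ∩
    ⋂ i : Fin n, (itr T θ (i : ℕ) ω) ⁻¹' (U (j i) ∩ fiber E (θ^[(i : ℕ)] ω))

end Top

/-- `Σ_{i=0}^{n-1} 1_A (T^i_ω x)`: the number of times the orbit of `x` up to time `n`
visits `A`. -/
noncomputable def orbCount (T : Ω → X → X) (θ : Ω → Ω) (A : Set X)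
    (n : ℕ) (ω : Ω) (x : X) : ℕ :=
  Nat.card {i : Fin n // itr T θ (i : ℕ) ω x ∈ A}

/-- `b_n(ω) = sup_{x ∈ E_ω} Σ_{i=0}^{n-1} 1_A (T^i_ω x)`. -/
noncomputable def bsup (T : Ω → X → X) (θ : Ω → Ω) (E : Set (Ω × X)) (A : Set X)
    (n : ℕ) (ω : Ω) : ℕ :=
  sSup {m | ∃ x ∈ fiber E ω, m = orbCount T θ A n ω x}

/-- The `ω`-orbit capacity `ocap^ω(A) = lim_{n→∞} (1/n) b_n(ω)` (as a `limsup`). -/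
noncomputable def ocap (T : Ω → X → X) (θ : Ω → Ω) (E : Set (Ω × X)) (A : Set X)
    (ω : Ω) : ℝ :=
  Filter.atTop.limsup (fun n : ℕ => (bsup T θ E A n ω : ℝ) / n)

section Metric

variable [PseudoMetricSpace X]

/-- The Bowen-type metric `d^ω_{ε,n}(x,y) = max_{0 ≤ k < n} d(T^k_ω x, T^k_ω y)/ε`. -/
noncomputable def dBowen (T : Ω → X → X) (θ : Ω → Ω) (ε : ℝ) (n : ℕ) (ω : Ω)
    (x y : X) : ℝ :=
  ⨆ k : Fin n, dist (itr T θ (k : ℕ) ω x) (itr T θ (k : ℕ) ω y) / ε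

/-- The diameter of a set with respect to a (not necessarily standard) metric `ρ`. -/
noncomputable def diamIn (ρ : X → X → ℝ) (A : Set X) : ℝ :=
  sSup {r | ∃ x ∈ A, ∃ y ∈ A, r = ρ x y}

/-- `cov(ω,ε,n)`: the minimal cardinality of a cover of `E_ω` by sets of
`d^ω_{ε,n}`-diameter strictly less than 1. -/
noncomputable def covN (T : Ω → X → X) (θ : Ω → Ω) (E : Set (Ω × X))
    (ε : ℝ) (n : ℕ) (ω : Ω) : ℕ :=
  sInf {m | ∃ A : Fin m → Set X, fiber E ω ⊆ (⋃ j, A j) ∧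
    ∀ j, diamIn (dBowen T θ ε n ω) (A j) < 1}

/-- `sep(ω,ε,n)`: the maximal cardinality of a subset of `E_ω` whose distinct points are
at `d^ω_{ε,n}`-distance at least 1. -/
noncomputable def sepN (T : Ω → X → X) (θ : Ω → Ω) (E : Set (Ω × X))
    (ε : ℝ) (n : ℕ) (ω : Ω) : ℕ :=
  sSup {m | ∃ F : Finset X, (F : Set X) ⊆ fiber E ω ∧ F.card = m ∧
    ∀ x ∈ F, ∀ y ∈ F, x ≠ y → 1 ≤ dBowen T θ ε n ω x y}

/-- `S'(ω,ε) = limsup_{n→∞} (1/n) log sep(ω,ε,n)`. -/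
noncomputable def Ssep (T : Ω → X → X) (θ : Ω → Ω) (E : Set (Ω × X))
    (ω : Ω) (ε : ℝ) : ℝ :=
  Filter.atTop.limsup (fun n : ℕ => Real.log (sepN T θ E ε n ω) / n)

/-- `S(ω,ε) = lim_{n→∞} (1/n) log cov(ω,ε,n)` (the limit exists by subadditivity and
equals the `limsup`). -/
noncomputable def Scov (T : Ω → X → X) (θ : Ω → Ω) (E : Set (Ω × X))
    (ω : Ω) (ε : ℝ) : ℝ :=
  Filter.atTop.limsup (fun n : ℕ => Real.log (covN T θ E ε n ω) / n)

/-- The fiberwise metric mean dimension computed from separated sets: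
`liminf_{1 > ε → 0⁺} S'(ω,ε)/(-log ε)`. -/
noncomputable def mdimMfibSep (T : Ω → X → X) (θ : Ω → Ω) (E : Set (Ω × X)) (ω : Ω) : ℝ :=
  Filter.liminf (fun ε => Ssep T θ E ω ε / (-Real.log ε)) (nhdsWithin 0 (Ioo (0:ℝ) 1))

/-- The fiberwise metric mean dimension `mdim_M(T,ω) = liminf_{1 > ε → 0⁺} S(ω,ε)/(-log ε)`. -/
noncomputable def mdimMfibCov (T : Ω → X → X) (θ : Ω → Ω) (E : Set (Ω × X)) (ω : Ω) : ℝ :=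
  Filter.liminf (fun ε => Scov T θ E ω ε / (-Real.log ε)) (nhdsWithin 0 (Ioo (0:ℝ) 1))

/-- The topological entropy `h_top(T) = ∫_Ω sup_{0<ε<1} S'(ω,ε) dP(ω)`. -/
noncomputable def htop (T : Ω → X → X) (θ : Ω → Ω) (E : Set (Ω × X))
    {mΩ : MeasurableSpace Ω} (P : Measure Ω) : ℝ≥0∞ :=
  ∫⁻ ω, ⨆ ε : Ioo (0:ℝ) 1, ENNReal.ofReal (Ssep T θ E ω (ε : ℝ)) ∂P

end Metric

section Mdim

variable [TopologicalSpace X] {mΩ : MeasurableSpace Ω}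

/-- The mean topological dimension with respect to the cover `U`:
`mdim(T,α) = lim_{n→∞} (1/n) ∫_Ω D(α_0^{n-1}(ω|E)) dP(ω)` (the limit exists by
subadditivity and equals the `liminf`). -/
noncomputable def mdimCov (P : Measure Ω) (T : Ω → X → X) (θ : Ω → Ω) (E : Set (Ω × X))
    {ι : Type*} [Fintype ι] (U : ι → Set X) : ℝ≥0∞ :=
  Filter.atTop.liminf (fun n : ℕ =>
    (∫⁻ ω, (DOn (fiber E ω) (dynCover T θ E U n ω) : ℝ≥0∞) ∂P) / (n : ℝ≥0∞))

/-- The mean topological dimension `mdim(T) = sup_α mdim(T,α)` over finite open covers. -/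
noncomputable def mdim (P : Measure Ω) (T : Ω → X → X) (θ : Ω → Ω)
    (E : Set (Ω × X)) : ℝ≥0∞ :=
  ⨆ (m : ℕ) (U : Fin m → Set X) (_ : IsOpenCover U), mdimCov P T θ E U

end Mdim

end Defs

/-!
Choose bump functions subordinate to the cover `α`, and evaluate them along the first `n` points of
an orbit: this maps `E_ω` continuously into the cube `[0, 1]^(n * |α|)`. If no point of the image
has more than `d` coordinates in common with a fixed interior point `ξ` of the cube, then the cells
cut out by the hyperplanes through `ξ` pull back to a cover of order at most `d` refining
`α_0^{n-1}(ω|E)`. Such a `ξ` is found among the points of a grid of mesh `1 / (q + 1)`: up to an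
error below the mesh, the image consists of `sep(ω, ε, n)` points, and comparing exponential moments
of the number of coincidences shows that `sep(ω, ε, n) * 2^(n * |α|) < q^(d + 1)` suffices. Where
the entropy is finite, the left-hand side grows at a rate independent of `q`, so `d = ⌊δ * n⌋` works
for any `δ > 0` once `q` is large. Dominated convergence finishes the proof.
-/

section Covers

variable {X ι : Type*} [TopologicalSpace X] [Fintype ι] {K : Set X} {U : ι → Set X} {d : ℕ}

theorem DOn_le_of_isOpenCoverOn {κ : Type*} [Finite κ] {V : κ → Set X} (hV : IsOpenCoverOn K V)
    (hVU : Refines V U) (hcard : ∀ x ∈ K, Nat.card {k // x ∈ V k} ≤ d + 1) : DOn K U ≤ d := by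
  let e := (Finite.equivFin κ).symm
  have hcover : IsOpenCoverOn K (V ∘ e) :=
    ⟨fun k => hV.1 (e k), hV.2.trans (e.surjective.iUnion_comp V).ge⟩
  have hmult : multOn K (V ∘ e) ≤ d + 1 := by
    refine csSup_le' ?_
    rintro _ ⟨x, hx, rfl⟩
    exact (Nat.card_congr (e.subtypeEquiv fun _ => Iff.rfl)).trans_le (hcard x hx)
  calc DOn K U ≤ ordOn K (V ∘ e) := Nat.sInf_le ⟨_, V ∘ e, hcover, fun k => hVU (e k), rfl⟩
    _ ≤ d := Nat.sub_le_of_le_add hmult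

variable {I : Type*} {r : I → ℝ} {σ τ : I → SignType} {y : I → ℝ}

/-- The open neighbourhood of the stratum `{y | sign ∘ y = σ}` of the coordinate hyperplane
arrangement in which the coordinates vanishing on the stratum are bounded by `r` and smaller than
all the others. Cells whose strata have the same dimension are disjoint. -/
def signCell (r : I → ℝ) (σ : I → SignType) : Set (I → ℝ) :=
  {y | (∀ i, σ i = 0 → |y i| < r i) ∧ (∀ i j, σ i = 0 → σ j ≠ 0 → |y i| < |y j|) ∧
    ∀ i, σ i ≠ 0 → SignType.sign (y i) = σ i}

theorem isOpen_signCell [Finite I] (r : I → ℝ) (σ : I → SignType) : IsOpen (signCell r σ) := by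
  have hsign (i : I) (hi : σ i ≠ 0) : IsOpen {y : I → ℝ | SignType.sign (y i) = σ i} := by
    rcases h : σ i
    · exact absurd h hi
    · simpa [sign_eq_neg_one_iff] using isOpen_lt (continuous_apply i) continuous_const
    · simpa [sign_eq_one_iff] using isOpen_lt continuous_const (continuous_apply i)
  simp only [signCell, ofPred_and, ofPred_forall]
  refine .inter ?_ (.inter ?_ ?_)
  · exact isOpen_iInter_of_finite fun i => isOpen_iInter_of_finite fun _ =>
      isOpen_lt (by fun_prop) continuous_const
  · exact isOpen_iInter_of_finite fun i => isOpen_iInter_of_finite fun j =>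
      isOpen_iInter_of_finite fun _ => isOpen_iInter_of_finite fun _ =>
      isOpen_lt (by fun_prop) (by fun_prop)
  · exact isOpen_iInter_of_finite fun i => isOpen_iInter_of_finite fun hi => hsign i hi

theorem mem_signCell_sign (hr : ∀ i, 0 < r i) (y : I → ℝ) :
    y ∈ signCell r fun i => SignType.sign (y i) := by
  refine ⟨fun i hi => ?_, fun i j hi hj => ?_, fun _ _ => rfl⟩
  · simpa [sign_eq_zero_iff.1 hi] using hr i
  · simpa [sign_eq_zero_iff.1 hi] using hj

theorem neg_lt_of_mem_signCell (hr : ∀ i, 0 < r i) (hy : y ∈ signCell r σ) {i : I}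
    (hi : σ i ≠ -1) : -r i < y i := by
  rcases h : σ i
  · exact (abs_lt.1 (hy.1 i h)).1
  · exact absurd h hi
  · have hpos : 0 < y i := sign_eq_one_iff.1 ((hy.2.2 i (by simp [h])).trans h)
    exact (neg_neg_of_pos (hr i)).trans hpos

theorem setOf_eq_zero_subset_or_subset_of_mem_signCell (hσ : y ∈ signCell r σ)
    (hτ : y ∈ signCell r τ) : {i | σ i = 0} ⊆ {i | τ i = 0} ∨ {i | τ i = 0} ⊆ {i | σ i = 0} := by
  by_contra! h
  obtain ⟨i, hi, hi'⟩ := not_subset.1 h.1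
  obtain ⟨j, hj, hj'⟩ := not_subset.1 h.2
  exact lt_asymm (hσ.2.1 i j hi hj') (hτ.2.1 j i hj hi')

theorem eq_of_mem_signCell [Finite I] (hσ : y ∈ signCell r σ) (hτ : y ∈ signCell r τ)
    (h : Nat.card {i // σ i = 0} = Nat.card {i // τ i = 0}) : σ = τ := by
  have hzero : {i | σ i = 0} = {i | τ i = 0} := by
    rcases setOf_eq_zero_subset_or_subset_of_mem_signCell hσ hτ with hs | hs
    · exact eq_of_subset_of_ncard_le hs h.ge
    · exact (eq_of_subset_of_ncard_le hs h.le).symm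
  funext i
  have hi : σ i = 0 ↔ τ i = 0 := Set.ext_iff.1 hzero i
  by_cases h0 : σ i = 0
  · rw [h0, hi.1 h0]
  · rw [← hσ.2.2 i h0, ← hτ.2.2 i (mt hi.2 h0)]

theorem DOn_le_of_signCell [Finite I] {Φ : X → I → ℝ} (hΦ : ContinuousOn Φ K)
    (hr : ∀ i, 0 < r i) (hd : ∀ x ∈ K, Nat.card {i // Φ x i = 0} ≤ d)
    (hU : ∀ σ, (Φ ⁻¹' signCell r σ ∩ K).Nonempty → ∃ j, Φ ⁻¹' signCell r σ ∩ K ⊆ U j) :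
    DOn K U ≤ d := by
  let S := {σ : I → SignType //
    Nat.card {i // σ i = 0} ≤ d ∧ (Φ ⁻¹' signCell r σ ∩ K).Nonempty}
  refine DOn_le_of_isOpenCoverOn (κ := S) (V := fun σ => Φ ⁻¹' signCell r σ ∩ K)
    ⟨fun σ => continuousOn_iff'.1 hΦ _ (isOpen_signCell r σ), fun x hx => ?_⟩
    (fun σ => hU σ σ.2.2) fun x _ => ?_
  · have hmem : x ∈ Φ ⁻¹' signCell r (fun i => SignType.sign (Φ x i)) ∩ K :=
      ⟨mem_signCell_sign hr (Φ x), hx⟩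
    exact mem_iUnion.2 ⟨⟨_, by simpa [sign_eq_zero_iff] using hd x hx, x, hmem⟩, hmem⟩
  · have hinj : Function.Injective fun σ : {σ : S // x ∈ Φ ⁻¹' signCell r σ ∩ K} =>
        (⟨Nat.card {i // σ.1.1 i = 0}, Nat.lt_succ_of_le σ.1.2.1⟩ : Fin (d + 1)) :=
      fun σ τ h => Subtype.ext (Subtype.ext
        (eq_of_mem_signCell σ.2.1 τ.2.1 (Fin.mk.inj h)))
    simpa using Nat.card_le_card_of_injective _ hinj

end Covers

section Coincidences

variable {I κ α : Type*} [Fintype I]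

theorem sum_pow_card_mem_le [DecidableEq I] [Fintype α] {A : I → Set α}
    (hA : ∀ i, (A i).Subsingleton) (q : ℕ) :
    ∑ ξ : I → α, q ^ Nat.card {i // ξ i ∈ A i} ≤ (Fintype.card α + q) ^ Fintype.card I := by
  classical
  have hcoord (i : I) : ∑ a, (if a ∈ A i then q else 1) ≤ Fintype.card α + q := by
    have hcard : (Finset.univ.filter (· ∈ A i)).card ≤ 1 :=
      Finset.card_le_one.2 fun a ha b hb => hA i (by simpa using ha) (by simpa using hb)
    calc ∑ a, (if a ∈ A i then q else 1)
        ≤ ∑ a, (1 + if a ∈ A i then q else 0) := by gcongr; split_ifs <;> simp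
      _ = Fintype.card α + (Finset.univ.filter (· ∈ A i)).card * q := by
          simp [Finset.sum_add_distrib, Finset.sum_ite]
      _ ≤ Fintype.card α + q := by gcongr; exact mul_le_of_le_one_left' hcard
  calc ∑ ξ : I → α, q ^ Nat.card {i // ξ i ∈ A i}
      = ∑ ξ : I → α, ∏ i, (if ξ i ∈ A i then q else 1) := by
        simp [Finset.prod_ite, Fintype.card_subtype]
    _ = ∏ i, ∑ a, (if a ∈ A i then q else 1) :=
        (Fintype.prod_sum fun i a => if a ∈ A i then q else 1).symm
    _ ≤ (Fintype.card α + q) ^ Fintype.card I :=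
        Finset.prod_le_pow_card _ _ _ fun i _ => hcoord i

theorem exists_forall_card_mem_le [Fintype α] {s : Finset κ} {A : κ → I → Set α}
    (hA : ∀ k i, (A k i).Subsingleton) {d : ℕ}
    (h : s.card * 2 ^ Fintype.card I < Fintype.card α ^ (d + 1)) :
    ∃ ξ : I → α, ∀ k ∈ s, Nat.card {i // ξ i ∈ A k i} ≤ d := by
  classical
  by_contra! hcon
  set q := Fintype.card α
  have hq : 0 < q := Nat.pos_of_ne_zero fun h0 => by simp [h0] at h
  have hle : q ^ Fintype.card I * q ^ (d + 1) ≤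
      q ^ Fintype.card I * (s.card * 2 ^ Fintype.card I) := by
    calc q ^ Fintype.card I * q ^ (d + 1) = ∑ _ξ : I → α, q ^ (d + 1) := by simp [q]
      _ ≤ ∑ ξ : I → α, ∑ k ∈ s, q ^ Nat.card {i // ξ i ∈ A k i} := by
          refine Finset.sum_le_sum fun ξ _ => ?_
          obtain ⟨k, hk, hlt⟩ := hcon ξ
          exact (Nat.pow_le_pow_right hq hlt).trans (Finset.single_le_sum_of_canonicallyOrdered
            (f := fun k => q ^ Nat.card {i // ξ i ∈ A k i}) hk)
      _ = ∑ k ∈ s, ∑ ξ : I → α, q ^ Nat.card {i // ξ i ∈ A k i} := Finset.sum_comm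
      _ ≤ ∑ _k ∈ s, (q + q) ^ Fintype.card I :=
          Finset.sum_le_sum fun k _ => sum_pow_card_mem_le (hA k) q
      _ = q ^ Fintype.card I * (s.card * 2 ^ Fintype.card I) := by
          rw [Finset.sum_const, smul_eq_mul, ← two_mul, mul_pow]; ring
  exact (Nat.le_of_mul_le_mul_left hle (by positivity)).not_gt h

/-- The points `1 / (q + 1), …, q / (q + 1)` of the open unit interval. -/
noncomputable def gridPoint (q : ℕ) (a : Fin q) : ℝ := (a + 1) / (q + 1)

theorem gridPoint_mem_Ioo {q : ℕ} (a : Fin q) : gridPoint q a ∈ Ioo (0 : ℝ) 1 := by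
  have ha : (a : ℝ) < q := by exact_mod_cast a.2
  refine ⟨by unfold gridPoint; positivity, ?_⟩
  rw [gridPoint, div_lt_one (by positivity)]
  linarith

theorem le_dist_gridPoint {q : ℕ} {a b : Fin q} (h : a ≠ b) :
    1 / (q + 1 : ℝ) ≤ dist (gridPoint q a) (gridPoint q b) := by
  have hab : (1 : ℝ) ≤ |(a : ℝ) - b| := by
    exact_mod_cast Int.one_le_abs (sub_ne_zero.2 (Nat.cast_injective.ne (Fin.val_ne_of_ne h)))
  rw [Real.dist_eq, gridPoint, gridPoint, ← sub_div, add_sub_add_right_eq_sub, abs_div,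
    abs_of_pos (by positivity : (0 : ℝ) < q + 1)]
  gcongr

theorem subsingleton_setOf_dist_gridPoint_lt (q : ℕ) (c : ℝ) :
    {a | dist (gridPoint q a) c < 1 / (2 * (q + 1))}.Subsingleton := by
  intro a ha b hb
  by_contra hne
  have hmesh : (1 : ℝ) / (q + 1) = 1 / (2 * (q + 1)) + 1 / (2 * (q + 1)) := by field_simp; norm_num
  exact (le_dist_gridPoint hne).not_gt <|
    (dist_triangle_right _ _ c).trans_lt (hmesh ▸ add_lt_add ha hb)

theorem exists_forall_card_eq_le_of_dist_lt {s : Finset κ} {φ : κ → I → ℝ} {q d : ℕ}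
    (h : s.card * 2 ^ Fintype.card I < q ^ (d + 1)) :
    ∃ ξ : I → ℝ, (∀ i, ξ i ∈ Ioo (0 : ℝ) 1) ∧ ∀ k ∈ s, ∀ y : I → ℝ,
      dist y (φ k) < 1 / (2 * (q + 1)) → Nat.card {i // y i = ξ i} ≤ d := by
  obtain ⟨a, ha⟩ := exists_forall_card_mem_le
    (A := fun k i => {a | dist (gridPoint q a) (φ k i) < 1 / (2 * (q + 1))})
    (fun k i => subsingleton_setOf_dist_gridPoint_lt q (φ k i))
    (show s.card * 2 ^ Fintype.card I < Fintype.card (Fin q) ^ (d + 1) by simpa using h)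
  refine ⟨fun i => gridPoint q (a i), fun i => gridPoint_mem_Ioo (a i), fun k hk y hy => ?_⟩
  have hsub : {i | y i = gridPoint q (a i)} ⊆
      {i | dist (gridPoint q (a i)) (φ k i) < 1 / (2 * (q + 1))} := fun i hi =>
    (congrArg (dist · (φ k i)) hi).symm.trans_lt ((dist_le_pi_dist y (φ k) i).trans_lt hy)
  exact (Nat.card_mono (toFinite _) hsub).trans (ha k hk)

end Coincidences

theorem exists_forall_card_le_pow_of_le_dist (X : Type*) [PseudoMetricSpace X] [CompactSpace X]
    {ε : ℝ} (hε : 0 < ε) :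
    ∃ N : ℕ, ∀ {α I : Type*} [Fintype I] (F : Finset α) (Ψ : α → I → X),
      ((F : Set α).Pairwise fun a b => ε ≤ dist (Ψ a) (Ψ b)) → F.card ≤ N ^ Fintype.card I := by
  classical
  obtain ⟨t, -, ht, hcover⟩ := Metric.finite_approx_of_totallyBounded
    (isCompact_univ (X := X)).totallyBounded (ε / 2) (half_pos hε)
  have := ht.fintype
  have hnear (x : X) : ∃ c : t, dist x c < ε / 2 := by simpa using hcover (mem_univ x)
  choose c hc using hnear
  refine ⟨Fintype.card t, fun {α I} _ F Ψ hF => ?_⟩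
  have hinj : Function.Injective fun (a : F) (i : I) => c (Ψ a i) := by
    intro a b hab
    by_contra hne
    refine (hF a.2 b.2 (Subtype.coe_injective.ne hne)).not_gt ((dist_pi_lt_iff hε).2 fun i => ?_)
    have hci : c (Ψ a i) = c (Ψ b i) := congrFun hab i
    calc dist (Ψ a i) (Ψ b i) ≤ dist (Ψ a i) (c (Ψ a i)) + dist (Ψ b i) (c (Ψ a i)) :=
          dist_triangle_right _ _ _
      _ < ε / 2 + ε / 2 := add_lt_add (hc _) (hci ▸ hc _)
      _ = ε := add_halves ε
  simpa using Fintype.card_le_of_injective _ hinj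

section Dynamics

variable {Ω X : Type*} {T : Ω → X → X} {θ : Ω → Ω} {E : Set (Ω × X)} {ω : Ω}

/-- The orbit segment `(x, T_ω x, …, T^{n-1}_ω x)` as a point of `X^n`. For the sup metric on `X^n`,
the Bowen metric is the pullback of the metric of `X^n` under this map, divided by `ε`. -/
def orbitSegment (T : Ω → X → X) (θ : Ω → Ω) (n : ℕ) (ω : Ω) (x : X) : Fin n → X :=
  fun k => itr T θ k ω x

section Topological

variable [TopologicalSpace X]

/-- The bundle maps restrict to continuous maps between the fibers along the forward orbit of `ω`:
this is the almost sure property of `ω` through which the bundle structure enters. -/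
structure ContinuousAlongOrbit (T : Ω → X → X) (θ : Ω → Ω) (E : Set (Ω × X)) (ω : Ω) : Prop where
  mapsTo (k : ℕ) : MapsTo (T (θ^[k] ω)) (fiber E (θ^[k] ω)) (fiber E (θ (θ^[k] ω)))
  continuousOn (k : ℕ) : ContinuousOn (T (θ^[k] ω)) (fiber E (θ^[k] ω))

namespace ContinuousAlongOrbit

theorem shift (h : ContinuousAlongOrbit T θ E ω) : ContinuousAlongOrbit T θ E (θ ω) :=
  ⟨fun k => h.mapsTo (k + 1), fun k => h.continuousOn (k + 1)⟩

theorem mapsTo_itr (h : ContinuousAlongOrbit T θ E ω) (n : ℕ) :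
    MapsTo (itr T θ n ω) (fiber E ω) (fiber E (θ^[n] ω)) := by
  induction n generalizing ω with
  | zero => exact mapsTo_id _
  | succ n ih => exact (ih h.shift).comp (h.mapsTo 0)

theorem continuousOn_itr (h : ContinuousAlongOrbit T θ E ω) (n : ℕ) :
    ContinuousOn (itr T θ n ω) (fiber E ω) := by
  induction n generalizing ω with
  | zero => exact continuousOn_id
  | succ n ih => exact (ih h.shift).comp (h.continuousOn 0) (h.mapsTo 0)

end ContinuousAlongOrbit

theorem ae_continuousAlongOrbit [MeasurableSpace Ω] {P : Measure Ω}
    (hθ : Measure.QuasiMeasurePreserving θ P P)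
    (hTmap : ∀ᵐ ω ∂P, MapsTo (T ω) (fiber E ω) (fiber E (θ ω)))
    (hTc : ∀ᵐ ω ∂P, ContinuousOn (T ω) (fiber E ω)) :
    ∀ᵐ ω ∂P, ContinuousAlongOrbit T θ E ω := by
  have h : ∀ᵐ ω ∂P, ∀ k : ℕ, MapsTo (T (θ^[k] ω)) (fiber E (θ^[k] ω)) (fiber E (θ (θ^[k] ω))) ∧
      ContinuousOn (T (θ^[k] ω)) (fiber E (θ^[k] ω)) :=
    ae_all_iff.2 fun k => (hθ.iterate k).ae (hTmap.and hTc)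
  filter_upwards [h] with ω hω using ⟨fun k => (hω k).1, fun k => (hω k).2⟩

variable {ι : Type*} [Fintype ι] {U : ι → Set X} {n d : ℕ}

theorem DOn_dynCover_le {f : BumpCovering ι X} (hf : f.IsSubordinate U)
    (hω : ContinuousAlongOrbit T θ E ω) {ξ : Fin n × ι → ℝ} (hξ : ∀ p, ξ p ∈ Ioo (0 : ℝ) 1)
    (hd : ∀ x ∈ fiber E ω, Nat.card {p // f p.2 (orbitSegment T θ n ω x p.1) = ξ p} ≤ d) :
    DOn (fiber E ω) (dynCover T θ E U n ω) ≤ d := by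
  let Φ (x : X) (p : Fin n × ι) : ℝ := f p.2 (orbitSegment T θ n ω x p.1) - ξ p
  have hΦ : ContinuousOn Φ (fiber E ω) := continuousOn_pi.2 fun p =>
    ((f p.2).continuous.comp_continuousOn (hω.continuousOn_itr p.1)).sub continuousOn_const
  refine DOn_le_of_signCell (r := ξ) hΦ (fun p => (hξ p).1)
    (by simpa only [Φ, sub_eq_zero] using hd) ?_
  rintro σ ⟨x₀, hx₀, -⟩
  have hσ (k : Fin n) : ∃ i, σ (k, i) ≠ -1 := by
    let i := f.ind (orbitSegment T θ n ω x₀ k) (mem_univ _)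
    refine ⟨i, fun hi => ?_⟩
    have hneg : Φ x₀ (k, i) < 0 :=
      sign_eq_neg_one_iff.1 ((hx₀.2.2 (k, i) (by simp [hi])).trans hi)
    have hone : f i (orbitSegment T θ n ω x₀ k) = 1 := f.ind_apply _ _
    exact (hone ▸ sub_neg.1 hneg).not_gt (hξ _).2
  choose j hj using hσ
  refine ⟨j, fun x hx => ⟨hx.2, mem_iInter.2 fun k => ⟨?_, hω.mapsTo_itr k hx.2⟩⟩⟩
  have hpos : 0 < f (j k) (orbitSegment T θ n ω x k) := by
    simpa [Φ] using neg_lt_of_mem_signCell (fun p => (hξ p).1) hx.1 (hj k)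
  exact hf (j k) (subset_tsupport _ hpos.ne')

theorem DOn_dynCover_le_mul_card [NormalSpace X] [ParacompactSpace X] (hU : IsOpenCover U)
    (hω : ContinuousAlongOrbit T θ E ω) (n : ℕ) :
    DOn (fiber E ω) (dynCover T θ E U n ω) ≤ n * Fintype.card ι := by
  obtain ⟨f, hf⟩ := BumpCovering.exists_isSubordinate isClosed_univ U hU.1 hU.2.ge
  refine DOn_dynCover_le hf hω (ξ := fun _ => 1 / 2) (fun _ => by norm_num) fun x _ => ?_
  simpa using Nat.card_le_card_of_injective _ (Subtype.val_injective
    (p := fun p : Fin n × ι => f p.2 (orbitSegment T θ n ω x p.1) = 1 / 2))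

end Topological

section Separated

variable [PseudoMetricSpace X] {ε : ℝ} {n : ℕ}

theorem dBowen_lt_one_iff (hε : 0 < ε) {x y : X} :
    dBowen T θ ε n ω x y < 1 ↔ dist (orbitSegment T θ n ω x) (orbitSegment T θ n ω y) < ε := by
  simp only [dist_pi_lt_iff hε, ← div_lt_one hε]
  refine ⟨fun h k => (le_ciSup (finite_range _).bddAbove k).trans_lt h, fun h => ?_⟩
  rcases isEmpty_or_nonempty (Fin n)
  · simp [dBowen]
  · obtain ⟨k, hk⟩ := exists_eq_ciSup_of_finite
      (f := fun k : Fin n => dist (itr T θ k ω x) (itr T θ k ω y) / ε)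
    rw [dBowen, ← hk]
    exact h k

/-- Finite subsets of the fiber over `ω` whose orbit segments of length `n` are at distance at least
`ε` from each other: `sep(ω, ε, n)` is the largest cardinality of such a set. -/
structure IsOrbitSeparated (T : Ω → X → X) (θ : Ω → Ω) (E : Set (Ω × X)) (ε : ℝ) (n : ℕ) (ω : Ω)
    (F : Finset X) : Prop where
  subset_fiber : (F : Set X) ⊆ fiber E ω
  pairwise : (F : Set X).Pairwise fun x y =>
    ε ≤ dist (orbitSegment T θ n ω x) (orbitSegment T θ n ω y)

theorem sepN_eq_sSup_card (hε : 0 < ε) :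
    sepN T θ E ε n ω = sSup (Finset.card '' {F | IsOrbitSeparated T θ E ε n ω F}) := by
  have hsep (F : Finset X) : (∀ x ∈ F, ∀ y ∈ F, x ≠ y → 1 ≤ dBowen T θ ε n ω x y) ↔
      (F : Set X).Pairwise fun x y =>
        ε ≤ dist (orbitSegment T θ n ω x) (orbitSegment T θ n ω y) := by
    simp only [Set.Pairwise, SetLike.mem_coe, ← not_lt, dBowen_lt_one_iff hε]
  refine congrArg sSup (Set.ext fun m => ⟨?_, ?_⟩)
  · rintro ⟨F, hFE, rfl, hF⟩
    exact ⟨F, ⟨hFE, (hsep F).1 hF⟩, rfl⟩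
  · rintro ⟨F, hF, rfl⟩
    exact ⟨F, hF.subset_fiber, rfl, (hsep F).2 hF.pairwise⟩

theorem IsOrbitSeparated.insert [DecidableEq X] {F : Finset X} {x : X}
    (hF : IsOrbitSeparated T θ E ε n ω F) (hx : x ∈ fiber E ω)
    (hfar : ∀ z ∈ F, ε ≤ dist (orbitSegment T θ n ω x) (orbitSegment T θ n ω z)) :
    IsOrbitSeparated T θ E ε n ω (insert x F) := by
  refine ⟨by simpa [insert_subset_iff] using ⟨hx, hF.subset_fiber⟩, ?_⟩
  rw [Finset.coe_insert, Set.pairwise_insert]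
  exact ⟨hF.pairwise, fun z hz _ => ⟨hfar z hz, dist_comm (α := Fin n → X) _ _ ▸ hfar z hz⟩⟩

variable [CompactSpace X]

theorem exists_forall_card_le_pow_of_isOrbitSeparated (T : Ω → X → X) (θ : Ω → Ω)
    (E : Set (Ω × X)) (hε : 0 < ε) :
    ∃ N : ℕ, ∀ (n : ℕ) (ω : Ω) (F : Finset X), IsOrbitSeparated T θ E ε n ω F → F.card ≤ N ^ n := by
  obtain ⟨N, hN⟩ := exists_forall_card_le_pow_of_le_dist X hε
  exact ⟨N, fun n ω F hF => by simpa using hN F (orbitSegment T θ n ω) hF.pairwise⟩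

theorem exists_forall_sepN_le_pow (T : Ω → X → X) (θ : Ω → Ω) (E : Set (Ω × X)) (hε : 0 < ε) :
    ∃ N : ℕ, ∀ (n : ℕ) (ω : Ω), sepN T θ E ε n ω ≤ N ^ n := by
  obtain ⟨N, hN⟩ := exists_forall_card_le_pow_of_isOrbitSeparated T θ E hε
  refine ⟨N, fun n ω => ?_⟩
  rw [sepN_eq_sSup_card hε]
  exact csSup_le' (forall_mem_image.2 fun F hF => hN n ω F hF)

theorem exists_card_eq_sepN_forall_exists_dist_lt (T : Ω → X → X) (θ : Ω → Ω) (E : Set (Ω × X))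
    (hε : 0 < ε) (n : ℕ) (ω : Ω) :
    ∃ F : Finset X, F.card = sepN T θ E ε n ω ∧ ∀ x ∈ fiber E ω, ∃ z ∈ F,
      dist (orbitSegment T θ n ω x) (orbitSegment T θ n ω z) < ε := by
  classical
  obtain ⟨N, hN⟩ := exists_forall_card_le_pow_of_isOrbitSeparated T θ E hε
  have hbdd : BddAbove (Finset.card '' {F | IsOrbitSeparated T θ E ε n ω F}) :=
    ⟨N ^ n, forall_mem_image.2 fun F hF => hN n ω F hF⟩
  have hempty : IsOrbitSeparated T θ E ε n ω ∅ := ⟨by simp, by simp⟩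
  obtain ⟨F, hF, hcard⟩ := Nat.sSup_mem ⟨_, mem_image_of_mem _ hempty⟩ hbdd
  refine ⟨F, hcard.trans (sepN_eq_sSup_card hε).symm, fun x hx => ?_⟩
  by_contra! hfar
  have hxF : x ∉ F := fun hxF => (hfar x hxF).not_gt (by rwa [dist_self])
  have hle : (insert x F).card ≤ F.card :=
    hcard ▸ le_csSup hbdd (mem_image_of_mem _ (hF.insert hx hfar))
  rw [Finset.card_insert_of_notMem hxF] at hle
  omega

theorem eventually_sepN_le_exp {h : ℝ} (hε : 0 < ε) (hS : Ssep T θ E ω ε < h) :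
    ∀ᶠ n : ℕ in atTop, (sepN T θ E ε n ω : ℝ) ≤ Real.exp (h * n) := by
  obtain ⟨N, hN⟩ := exists_forall_sepN_le_pow T θ E hε
  have hlog (n : ℕ) : Real.log (sepN T θ E ε n ω) / n ≤ Real.log N := by
    refine div_le_of_le_mul₀ n.cast_nonneg (Real.log_natCast_nonneg N) ?_
    rcases (sepN T θ E ε n ω).eq_zero_or_pos with h0 | hpos
    · simpa [h0] using mul_nonneg (Real.log_natCast_nonneg N) n.cast_nonneg
    · calc Real.log (sepN T θ E ε n ω) ≤ Real.log ((N : ℝ) ^ n) :=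
            Real.log_le_log (by exact_mod_cast hpos) (by exact_mod_cast hN n ω)
        _ = Real.log N * n := by rw [Real.log_pow, mul_comm]
  filter_upwards [eventually_lt_of_limsup_lt hS (isBoundedUnder_of ⟨_, hlog⟩),
    eventually_gt_atTop 0] with n hn hn0
  rw [div_lt_iff₀ (by exact_mod_cast hn0)] at hn
  exact (Real.le_exp_log _).trans (Real.exp_le_exp.2 hn.le)

end Separated

section FiberEntropy

theorem pow_lt_pow_floor_mul_add_one {B q δ : ℝ} (hB : 0 ≤ B) (hq : 1 ≤ q) (hBq : B < q ^ δ) {n : ℕ}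
    (hn : n ≠ 0) : B ^ n < q ^ (⌊δ * n⌋₊ + 1) :=
  calc B ^ n < (q ^ δ) ^ n := pow_lt_pow_left₀ hBq hB hn
    _ = q ^ (δ * n) := by rw [Real.rpow_mul (by positivity), Real.rpow_natCast]
    _ ≤ q ^ ((⌊δ * n⌋₊ + 1 : ℕ) : ℝ) :=
        Real.rpow_le_rpow_of_exponent_le hq (by exact_mod_cast (Nat.lt_floor_add_one _).le)
    _ = q ^ (⌊δ * n⌋₊ + 1) := Real.rpow_natCast _ _

variable [PseudoMetricSpace X]

/-- The entropy `sup_{0<ε<1} S'(ω,ε)` of `T` over `ω`, the integrand of `h_top(T)`. -/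
noncomputable def fiberEntropy (T : Ω → X → X) (θ : Ω → Ω) (E : Set (Ω × X)) (ω : Ω) : ℝ≥0∞ :=
  ⨆ ε : Ioo (0 : ℝ) 1, ENNReal.ofReal (Ssep T θ E ω ε)

theorem Ssep_le_toReal_fiberEntropy (hω : fiberEntropy T θ E ω ≠ ⊤) {ε : ℝ}
    (hε : ε ∈ Ioo (0 : ℝ) 1) : Ssep T θ E ω ε ≤ (fiberEntropy T θ E ω).toReal :=
  (ENNReal.ofReal_le_iff_le_toReal hω).1 <|
    le_iSup (fun ε : Ioo (0 : ℝ) 1 => ENNReal.ofReal (Ssep T θ E ω ε)) ⟨ε, hε⟩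

variable [CompactSpace X] {ι : Type*} [Fintype ι] {U : ι → Set X}

theorem DOn_dynCover_le_of_sepN_mul_lt {f : BumpCovering ι X} (hf : f.IsSubordinate U)
    (hω : ContinuousAlongOrbit T θ E ω) {ε : ℝ} (hε : 0 < ε) {q n d : ℕ}
    (hfε : ∀ x y, dist x y < ε → ∀ i, dist (f i x) (f i y) < 1 / (2 * (q + 1)))
    (h : sepN T θ E ε n ω * 2 ^ (n * Fintype.card ι) < q ^ (d + 1)) :
    DOn (fiber E ω) (dynCover T θ E U n ω) ≤ d := by
  obtain ⟨F, hcard, hF⟩ := exists_card_eq_sepN_forall_exists_dist_lt T θ E hε n ω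
  let φ (x : X) (p : Fin n × ι) : ℝ := f p.2 (orbitSegment T θ n ω x p.1)
  obtain ⟨ξ, hξ, hcoincide⟩ := exists_forall_card_eq_le_of_dist_lt (s := F) (φ := φ)
    (show F.card * 2 ^ Fintype.card (Fin n × ι) < q ^ (d + 1) by simpa [hcard] using h)
  refine DOn_dynCover_le hf hω hξ fun x hx => ?_
  obtain ⟨z, hz, hxz⟩ := hF x hx
  exact hcoincide z hz (φ x) <| (dist_pi_lt_iff (by positivity)).2 fun p =>
    hfε _ _ ((dist_le_pi_dist _ _ p.1).trans_lt hxz) p.2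

theorem eventually_DOn_dynCover_le (hU : IsOpenCover U) (hω : ContinuousAlongOrbit T θ E ω)
    (hfin : fiberEntropy T θ E ω ≠ ⊤) {δ : ℝ} (hδ : 0 < δ) :
    ∀ᶠ n : ℕ in atTop, (DOn (fiber E ω) (dynCover T θ E U n ω) : ℝ) ≤ δ * n := by
  obtain ⟨f, hf⟩ := BumpCovering.exists_isSubordinate isClosed_univ U hU.1 hU.2.ge
  set h := (fiberEntropy T θ E ω).toReal + 1
  obtain ⟨q, hBq, hq⟩ : ∃ q : ℕ, Real.exp h * 2 ^ Fintype.card ι < (q : ℝ) ^ δ ∧ 1 ≤ q :=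
    ((((tendsto_rpow_atTop hδ).comp tendsto_natCast_atTop_atTop).eventually_gt_atTop _).and
      (eventually_ge_atTop 1)).exists
  obtain ⟨ε₀, hε₀, hfε⟩ := Metric.uniformContinuous_iff.1
    (CompactSpace.uniformContinuous_of_continuous (continuous_pi fun i => (f i).continuous))
    (1 / (2 * (q + 1))) (by positivity)
  set ε := min ε₀ (1 / 2)
  have hε : ε ∈ Ioo (0 : ℝ) 1 := ⟨by positivity, (min_le_right _ _).trans_lt (by norm_num)⟩
  have hS : Ssep T θ E ω ε < h := (Ssep_le_toReal_fiberEntropy hfin hε).trans_lt (lt_add_one _)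
  filter_upwards [eventually_sepN_le_exp hε.1 hS, eventually_ne_atTop 0] with n hn hn0
  have hcount : (sepN T θ E ε n ω : ℝ) * 2 ^ (n * Fintype.card ι) < q ^ (⌊δ * n⌋₊ + 1) :=
    calc (sepN T θ E ε n ω : ℝ) * 2 ^ (n * Fintype.card ι)
        ≤ Real.exp (h * n) * 2 ^ (n * Fintype.card ι) := by gcongr
      _ = (Real.exp h * 2 ^ Fintype.card ι) ^ n := by
          rw [mul_pow, ← Real.exp_nat_mul, ← pow_mul, mul_comm h, mul_comm n (Fintype.card ι)]
      _ < q ^ (⌊δ * n⌋₊ + 1) :=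
          pow_lt_pow_floor_mul_add_one (by positivity) (by exact_mod_cast hq) hBq hn0
  have hD : DOn (fiber E ω) (dynCover T θ E U n ω) ≤ ⌊δ * n⌋₊ :=
    DOn_dynCover_le_of_sepN_mul_lt hf hω hε.1 (fun x y hxy i =>
      (dist_le_pi_dist _ _ i).trans_lt (hfε (hxy.trans_le (min_le_left _ _))))
      (by exact_mod_cast hcount)
  exact (Nat.cast_le.2 hD).trans (Nat.floor_le (by positivity))

theorem tendsto_DOn_dynCover_div (hU : IsOpenCover U) (hω : ContinuousAlongOrbit T θ E ω)
    (hfin : fiberEntropy T θ E ω ≠ ⊤) :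
    Tendsto (fun n : ℕ => (DOn (fiber E ω) (dynCover T θ E U n ω) : ℝ≥0∞) / n) atTop (𝓝 0) := by
  refine ENNReal.tendsto_nhds_zero.2 fun δ hδ => ?_
  rcases eq_or_ne δ ⊤ with rfl | hδt
  · simp
  filter_upwards [eventually_DOn_dynCover_le hU hω hfin (ENNReal.toReal_pos hδ.ne' hδt)] with n hn
  refine ENNReal.div_le_of_le_mul ?_
  have hle := ENNReal.ofReal_le_ofReal hn
  rwa [ENNReal.ofReal_natCast, ENNReal.ofReal_mul ENNReal.toReal_nonneg, ENNReal.ofReal_toReal hδt,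
    ENNReal.ofReal_natCast] at hle

end FiberEntropy

end Dynamics

section InnerNull

variable {Ω : Type*} [MeasurableSpace Ω] {μ : Measure Ω} {s t : Set Ω}

/-- `s` is null for the inner measure of `μ`. This is how finiteness of the integral of a function
that need not be measurable, such as the fiber entropy, bounds the set where it is infinite. -/
def InnerNull (μ : Measure Ω) (s : Set Ω) : Prop :=
  ∀ ⦃t⦄, t ⊆ s → MeasurableSet t → μ t = 0

theorem InnerNull.mono_ae (hs : InnerNull μ s) (hts : ∀ᵐ ω ∂μ, ω ∈ t → ω ∈ s) : InnerNull μ t := by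
  intro u hut hu
  let N := toMeasurable μ {ω | ¬(ω ∈ t → ω ∈ s)}
  have hN : μ N = 0 := (measure_toMeasurable _).trans hts
  have hdiff : μ (u \ N) = 0 := by
    refine hs (fun ω hω => ?_) (hu.diff (measurableSet_toMeasurable _ _))
    by_contra hωs
    exact hω.2 (subset_toMeasurable _ _ fun h => hωs (h (hut hω.1)))
  exact (measure_sdiff_null hN).symm.trans hdiff

theorem innerNull_setOf_eq_top {f : Ω → ℝ≥0∞} (hf : ∫⁻ ω, f ω ∂μ ≠ ⊤) :
    InnerNull μ {ω | f ω = ⊤} := by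
  intro t ht hmeas
  by_contra h0
  refine hf (top_le_iff.1 ?_)
  calc ⊤ = ∫⁻ _ in t, ⊤ ∂μ := by rw [setLIntegral_const, ENNReal.top_mul h0]
    _ ≤ ∫⁻ ω in t, f ω ∂μ := setLIntegral_mono' hmeas fun ω hω => (ht hω).ge
    _ ≤ ∫⁻ ω, f ω ∂μ := setLIntegral_le_lintegral _ _

theorem tendsto_lintegral_zero_of_dominated {F : ℕ → Ω → ℝ≥0∞} (bound : Ω → ℝ≥0∞)
    (hbound : ∀ n, F n ≤ᵐ[μ] bound) (hfin : ∫⁻ ω, bound ω ∂μ ≠ ⊤)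
    (hlim : InnerNull μ {ω | ¬Tendsto (fun n => F n ω) atTop (𝓝 0)}) :
    Tendsto (fun n => ∫⁻ ω, F n ω ∂μ) atTop (𝓝 0) := by
  choose g hgmeas hgF hgint using fun n => exists_measurable_le_lintegral_eq (μ := μ) (F n)
  have hglim : ∀ᵐ ω ∂μ, Tendsto (fun n => g n ω) atTop (𝓝 0) := by
    refine hlim (fun ω hω hFω => hω ?_) (measurableSet_tendsto (𝓝 0) hgmeas).compl
    exact tendsto_of_tendsto_of_tendsto_of_le_of_le tendsto_const_nhds hFω
      (fun _ => zero_le) fun n => hgF n ω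
  have hgbound (n : ℕ) : g n ≤ᵐ[μ] bound :=
    (hbound n).mono fun ω hω => (hgF n ω).trans hω
  simpa [hgint] using
    tendsto_lintegral_of_dominated_convergence bound hgmeas hgbound hfin hglim

end InnerNull

theorem mdimCov_eq_zero {Ω X ι : Type*} [MeasurableSpace Ω] {P : Measure Ω} [IsFiniteMeasure P]
    [PseudoMetricSpace X] [CompactSpace X] [Fintype ι] {U : ι → Set X} {T : Ω → X → X} {θ : Ω → Ω}
    {E : Set (Ω × X)} (hU : IsOpenCover U) (hcont : ∀ᵐ ω ∂P, ContinuousAlongOrbit T θ E ω)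
    (hfin : InnerNull P {ω | fiberEntropy T θ E ω = ⊤}) : mdimCov P T θ E U = 0 := by
  let D (n : ℕ) (ω : Ω) : ℝ≥0∞ := DOn (fiber E ω) (dynCover T θ E U n ω)
  have hbound (n : ℕ) : (fun ω => D n ω / n) ≤ᵐ[P] fun _ => (Fintype.card ι : ℝ≥0∞) := by
    filter_upwards [hcont] with ω hω
    refine ENNReal.div_le_of_le_mul ?_
    rw [← Nat.cast_mul, mul_comm, Nat.cast_le]
    exact DOn_dynCover_le_mul_card hU hω n
  have hlim : InnerNull P {ω | ¬Tendsto (fun n : ℕ => D n ω / n) atTop (𝓝 0)} := by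
    refine hfin.mono_ae ?_
    filter_upwards [hcont] with ω hω
    exact not_imp_comm.1 (tendsto_DOn_dynCover_div hU hω)
  have htendsto : Tendsto (fun n : ℕ => ∫⁻ ω, D n ω / n ∂P) atTop (𝓝 0) :=
    tendsto_lintegral_zero_of_dominated _ hbound
      (by simpa using ENNReal.mul_ne_top (ENNReal.natCast_ne_top _) (measure_ne_top P univ)) hlim
  refine (htendsto.congr' ?_).liminf_eq
  filter_upwards [eventually_ne_atTop 0] with n hn
  simp only [div_eq_mul_inv]
  exact lintegral_mul_const' _ _ (by simpa using hn)

theorem stmt13_general {Ω X : Type*} [MeasurableSpace Ω] {P : Measure Ω} [IsFiniteMeasure P]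
    [PseudoMetricSpace X] [CompactSpace X] {θ : Ω → Ω} (hθ : Measure.QuasiMeasurePreserving θ P P)
    {E : Set (Ω × X)} {T : Ω → X → X}
    (hTmap : ∀ᵐ ω ∂P, MapsTo (T ω) (fiber E ω) (fiber E (θ ω)))
    (hTc : ∀ᵐ ω ∂P, ContinuousOn (T ω) (fiber E ω))
    (hfin : InnerNull P {ω | fiberEntropy T θ E ω = ⊤}) :
    mdim P T θ E = 0 := by
  simp only [mdim, ENNReal.iSup_eq_zero]
  exact fun _ _ hU => mdimCov_eq_zero hU (ae_continuousAlongOrbit hθ hTmap hTc) hfin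

theorem stmt13
    {Ω X : Type*} [MeasurableSpace Ω]
    (P : MeasureTheory.Measure Ω) [MeasureTheory.IsProbabilityMeasure P] [P.IsComplete]
    [MetricSpace X] [CompactSpace X] [MeasurableSpace X] [BorelSpace X]
    (θ : Ω → Ω) (hθ : MeasureTheory.MeasurePreserving θ P P)
    (E : Set (Ω × X)) (hE : MeasurableSet E)
    (hEne : ∀ ω, (fiber E ω).Nonempty) (hEcp : ∀ ω, IsCompact (fiber E ω))
    (T : Ω → X → X) (hTm : Measurable fun p : Ω × X => T p.1 p.2)
    (hTmap : ∀ᵐ ω ∂P, Set.MapsTo (T ω) (fiber E ω) (fiber E (θ ω)))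
    (hTc : ∀ᵐ ω ∂P, ContinuousOn (T ω) (fiber E ω))
    (hfin : htop T θ E P ≠ ⊤) :
    mdim P T θ E = 0 :=
  stmt13_general hθ.quasiMeasurePreserving hTmap hTc (innerNull_setOf_eq_top hfin)
end

section
/- Under the Setup, let E′ ⊆ X be a closed set. Then ∫_Ω ocap^ω(E′) dP(ω) = sup{ μ(Ω×E′) : μ ∈ I_P(E) }. -/
open MeasureTheory Set Filter Topology
open scoped ENNReal

/-!
The orbit capacity of `A` over `ω` is the asymptotic supremum, over the orbits starting in the fiber
`E_ω`, of the Birkhoff averages of the indicator of `Ω × A` under the skew product `Θ`. Replacing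
the indicator by a bounded measurable `f` and integrating over `ω` gives a sublinear functional `N`.

If `μ` is invariant, the maximal ergodic theorem bounds `∫ f ∂μ` by the integral of the limsup of
the Birkhoff averages of `f`, hence by `N f`. Conversely, Hahn-Banach yields a linear `ℓ ≤ N` that
agrees with `N` at the indicator of `Ω × A`. It is invariant because the averages of `f ∘ Θ - f`
telescope, so that `N (f ∘ Θ - f) ≤ 0` for `f` and `-f`. It also satisfies
`ℓ f ≤ ∫ sup_{E_ω} f ∂P`, so by Dini's theorem on the compact fibers it is a Daniell integral on the
functions that are continuous on the fibers, where it is therefore integration against an invariant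
measure `μ`. Since `A` is closed, approximating its indicator by continuous functions from above
shows that `μ (Ω × A)` is at least the value of `ℓ` at the indicator of `Ω × A`.

The Daniell integral is represented through the regions `f z ≤ t < g z` in the product with the
line: the measure they carry is invariant under vertical translations, hence a product with Lebesgue
measure, and the other factor is the representing measure. Suprema over the fibers are measurable
because `P` is complete: projections of measurable sets are analytic, hence universally measurable,
after reducing `Ω` to a standard Borel space.
-/

section Daniell

variable {Z : Type*}

/-- The region `{(z, t) | f z ≤ t < g z}` between two graphs; nothing lies over a point `z` with
`g z ≤ f z`. -/
def graphRegion (f g : Z → ℝ) : Set (Z × ℝ) := {p | p.2 ∈ Ico (f p.1) (g p.1)}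

/-- The regions between the graphs of functions in `L`: a semiring of sets on which a functional
on `L` induces a content. -/
def graphRegions (L : Submodule ℝ (Z → ℝ)) : Set (Set (Z × ℝ)) :=
  {S | ∃ f ∈ L, ∃ g ∈ L, graphRegion f g = S}

/-- The length of the vertical section of `S` over `z`; it is `0` if the section has infinite
length. -/
noncomputable def sectionLength (S : Set (Z × ℝ)) (z : Z) : ℝ :=
  volume.real (Prod.mk z ⁻¹' S)

/-- A Daniell integral on a space `L` of functions: a linear functional that is positive and
sequentially continuous from above at `0`. It is encoded as a linear map on all functions, of
which only the values on `L` matter. -/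
structure IsDaniellIntegral (L : Submodule ℝ (Z → ℝ)) (ℓ : (Z → ℝ) →ₗ[ℝ] ℝ) : Prop where
  nonneg : ∀ f ∈ L, 0 ≤ f → 0 ≤ ℓ f
  tendsto_zero : ∀ f : ℕ → Z → ℝ, (∀ n, f n ∈ L) → Antitone f →
    (∀ z, Tendsto (fun n => f n z) atTop (𝓝 0)) → Tendsto (fun n => ℓ (f n)) atTop (𝓝 0)

lemma sectionLength_nonneg (S : Set (Z × ℝ)) : 0 ≤ sectionLength S := fun _ => measureReal_nonneg

lemma sectionLength_graphRegion (f g : Z → ℝ) :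
    sectionLength (graphRegion f g) = (g - f) ⊔ 0 :=
  funext fun z => Real.volume_real_Ico (a := f z) (b := g z)

lemma empty_mem_graphRegions (L : Submodule ℝ (Z → ℝ)) : ∅ ∈ graphRegions L :=
  ⟨0, L.zero_mem, 0, L.zero_mem, by simp [graphRegion]⟩

lemma graphRegion_inter (f g f' g' : Z → ℝ) :
    graphRegion f g ∩ graphRegion f' g' = graphRegion (f ⊔ f') (g ⊓ g') :=
  Set.ext fun _ => Set.ext_iff.1 Ico_inter_Ico _

lemma graphRegion_sdiff (f g f' g' : Z → ℝ) :
    graphRegion f g \ graphRegion f' g' =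
      graphRegion f (g ⊓ f') ∪ graphRegion (f ⊔ (g' ⊔ f')) g := by
  ext p
  simp only [graphRegion, Set.mem_sdiff, mem_union, mem_ofPred_eq, mem_Ico, Pi.sup_apply,
    Pi.inf_apply]
  grind

variable {L : Submodule ℝ (Z → ℝ)}

lemma infClosed_of_supClosed (hL : SupClosed (L : Set (Z → ℝ))) :
    InfClosed (L : Set (Z → ℝ)) := by
  intro f hf g hg
  simpa only [SetLike.mem_coe, ← neg_inf, neg_neg] using
    L.neg_mem (hL (L.neg_mem hf) (L.neg_mem hg))

lemma const_mem_of_one_mem (h1 : (1 : Z → ℝ) ∈ L) (c : ℝ) : (fun _ => c) ∈ L := by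
  simpa only [Pi.one_def, Pi.smul_def, smul_eq_mul, mul_one] using L.smul_mem c h1

lemma isSetSemiring_graphRegions (hL : SupClosed (L : Set (Z → ℝ))) :
    IsSetSemiring (graphRegions L) where
  empty_mem := empty_mem_graphRegions L
  inter_mem := by
    rintro _ ⟨f, hf, g, hg, rfl⟩ _ ⟨f', hf', g', hg', rfl⟩
    exact ⟨f ⊔ f', hL hf hf', g ⊓ g', infClosed_of_supClosed hL hg hg',
      (graphRegion_inter f g f' g').symm⟩
  sdiff_eq_sUnion' := by
    classical
    rintro _ ⟨f, hf, g, hg, rfl⟩ _ ⟨f', hf', g', hg', rfl⟩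
    refine ⟨{graphRegion f (g ⊓ f'), graphRegion (f ⊔ (g' ⊔ f')) g}, ?_, ?_, ?_⟩
    · rw [Finset.coe_pair, pair_subset_iff]
      exact ⟨⟨f, hf, _, infClosed_of_supClosed hL hg hf', rfl⟩,
        ⟨_, hL hf (hL hg' hf'), g, hg, rfl⟩⟩
    · rw [Finset.coe_pair]
      refine (pairwiseDisjoint_singleton _ _).insert ?_
      rintro S rfl -
      refine Set.disjoint_left.2 fun p hp hp' => ?_
      exact (hp.2.trans_le inf_le_right).not_ge ((le_sup_right.trans le_sup_right).trans hp'.1)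
    · rw [Finset.coe_pair, sUnion_pair, graphRegion_sdiff]

lemma sectionLength_mem (hL : SupClosed (L : Set (Z → ℝ))) {S : Set (Z × ℝ)}
    (hS : S ∈ graphRegions L) : sectionLength S ∈ L := by
  obtain ⟨f, hf, g, hg, rfl⟩ := hS
  rw [sectionLength_graphRegion]
  exact hL (L.sub_mem hg hf) L.zero_mem

lemma ofReal_sectionLength {S : Set (Z × ℝ)} (hS : S ∈ graphRegions L) (z : Z) :
    ENNReal.ofReal (sectionLength S z) = volume (Prod.mk z ⁻¹' S) := by
  obtain ⟨f, -, g, -, rfl⟩ := hS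
  exact ofReal_measureReal (measure_Ico_lt_top (a := f z) (b := g z)).ne

lemma sectionLength_sUnion {I : Finset (Set (Z × ℝ))} (hI : ↑I ⊆ graphRegions L)
    (hd : PairwiseDisjoint (I : Set (Set (Z × ℝ))) id) :
    sectionLength (⋃₀ (I : Set (Set (Z × ℝ)))) = ∑ S ∈ I, sectionLength S := by
  have hmeas (S) (hS : S ∈ I) (z : Z) : MeasurableSet (Prod.mk z ⁻¹' S) := by
    obtain ⟨f, -, g, -, rfl⟩ := hI hS
    exact measurableSet_Ico (a := f z) (b := g z)
  have hfin (S) (hS : S ∈ I) (z : Z) : volume (Prod.mk z ⁻¹' S) ≠ ∞ := by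
    rw [← ofReal_sectionLength (hI hS)]
    exact ENNReal.ofReal_ne_top
  ext z
  rw [Finset.sum_apply, sectionLength, sUnion_eq_biUnion, preimage_iUnion₂]
  exact measureReal_biUnion_finset (fun S hS S' hS' h => (hd hS hS' h).preimage _)
    (fun S hS => hmeas S hS z) fun S hS => hfin S hS z

namespace IsDaniellIntegral

variable {ℓ : (Z → ℝ) →ₗ[ℝ] ℝ}

lemma mono (hℓ : IsDaniellIntegral L ℓ) {f g : Z → ℝ} (hf : f ∈ L) (hg : g ∈ L) (hfg : f ≤ g) :
    ℓ f ≤ ℓ g := by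
  simpa only [map_sub, sub_nonneg] using hℓ.nonneg _ (L.sub_mem hg hf) (sub_nonneg.2 hfg)

lemma ofReal_le_tsum (hℓ : IsDaniellIntegral L ℓ) (hL : SupClosed (L : Set (Z → ℝ)))
    {u : Z → ℝ} {v : ℕ → Z → ℝ} (hu : u ∈ L) (hv : ∀ n, v n ∈ L) (hv0 : ∀ n, 0 ≤ v n)
    (huv : ∀ z, ENNReal.ofReal (u z) ≤ ∑' n, ENNReal.ofReal (v n z)) :
    ENNReal.ofReal (ℓ u) ≤ ∑' n, ENNReal.ofReal (ℓ (v n)) := by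
  let s (N : ℕ) : Z → ℝ := ∑ n ∈ Finset.range N, v n
  let r (N : ℕ) : Z → ℝ := (u - s N) ⊔ 0
  have hs (N) : s N ∈ L := L.sum_mem fun n _ => hv n
  have hr (N) : r N ∈ L := hL (L.sub_mem hu (hs N)) L.zero_mem
  have hs_mono : Monotone s := monotone_nat_of_le_succ fun N => by
    simpa only [s, Finset.sum_range_succ] using le_add_of_nonneg_right (hv0 N)
  have hr_anti : Antitone r := fun M N hMN => sup_le_sup_right (sub_le_sub_left (hs_mono hMN) u) 0
  have hr_zero (z) : Tendsto (fun N => r N z) atTop (𝓝 0) := by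
    have h : Tendsto (fun N => ENNReal.ofReal (u z) - ∑ n ∈ Finset.range N, ENNReal.ofReal (v n z))
        atTop (𝓝 0) := by
      rw [← tsub_eq_zero_of_le (huv z)]
      exact ENNReal.Tendsto.sub tendsto_const_nhds ENNReal.summable.hasSum.tendsto_sum_nat
        (Or.inl ENNReal.ofReal_ne_top)
    refine ((ENNReal.tendsto_toReal ENNReal.zero_ne_top).comp h).congr fun N => ?_
    rw [Function.comp_apply, ← ENNReal.ofReal_sum_of_nonneg fun n _ => hv0 n z,
      ← ENNReal.ofReal_sub _ (Finset.sum_nonneg fun n _ => hv0 n z), ENNReal.toReal_ofReal']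
    simp [r, s]
  have hle (N) : ENNReal.ofReal (ℓ u) ≤
      ENNReal.ofReal (ℓ (r N)) + ∑' n, ENNReal.ofReal (ℓ (v n)) := calc
    ENNReal.ofReal (ℓ u) ≤ ENNReal.ofReal (ℓ (r N + s N)) :=
      ENNReal.ofReal_le_ofReal (hℓ.mono hu (L.add_mem (hr N) (hs N))
        (sub_le_iff_le_add.1 le_sup_left))
    _ = ENNReal.ofReal (ℓ (r N) + ∑ n ∈ Finset.range N, ℓ (v n)) := by rw [map_add, map_sum]
    _ ≤ ENNReal.ofReal (ℓ (r N)) + ∑ n ∈ Finset.range N, ENNReal.ofReal (ℓ (v n)) := by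
      rw [← ENNReal.ofReal_sum_of_nonneg fun n _ => hℓ.nonneg _ (hv n) (hv0 n)]
      exact ENNReal.ofReal_add_le
    _ ≤ _ := by gcongr; exact ENNReal.sum_le_tsum _
  refine ge_of_tendsto' (x := atTop) ?_ hle
  simpa using (ENNReal.tendsto_ofReal (hℓ.tendsto_zero r hr hr_anti hr_zero)).add_const _

/-- The content on graph regions whose value is the Daniell integral of the section length. -/
noncomputable def content (hℓ : IsDaniellIntegral L ℓ) (hL : SupClosed (L : Set (Z → ℝ))) :
    AddContent ℝ≥0∞ (graphRegions L) where
  toFun S := ENNReal.ofReal (ℓ (sectionLength S))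
  empty' := by
    have h : sectionLength (∅ : Set (Z × ℝ)) = 0 := funext fun z => by simp [sectionLength]
    simp [h]
  sUnion' I hI hd _ := by
    rw [sectionLength_sUnion hI hd, map_sum, ENNReal.ofReal_sum_of_nonneg]
    exact fun S hS => hℓ.nonneg _ (sectionLength_mem hL (hI hS)) (sectionLength_nonneg S)

lemma isSigmaSubadditive_content (hℓ : IsDaniellIntegral L ℓ) (hL : SupClosed (L : Set (Z → ℝ))) :
    (hℓ.content hL).IsSigmaSubadditive := by
  intro S hS hU
  refine hℓ.ofReal_le_tsum hL (sectionLength_mem hL hU) (fun n => sectionLength_mem hL (hS n))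
    (fun n => sectionLength_nonneg (S n)) fun z => ?_
  rw [ofReal_sectionLength hU, preimage_iUnion]
  exact (measure_iUnion_le _).trans_eq (tsum_congr fun n => (ofReal_sectionLength (hS n) z).symm)

end IsDaniellIntegral

lemma eq_prod_volume_of_map_add_right [MeasurableSpace Z] {ν : Measure (Z × ℝ)}
    (hν : ∀ c : ℝ, ν.map (Prod.map id (c + ·)) = ν) (hfin : ν (univ ×ˢ Ico 0 1) ≠ ∞) :
    ν = ((ν.restrict (univ ×ˢ Ico 0 1)).map Prod.fst).prod volume := by
  set μ := (ν.restrict (univ ×ˢ Ico 0 1)).map Prod.fst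
  have hμ {A : Set Z} (hA : MeasurableSet A) : μ A = ν (A ×ˢ Ico 0 1) := by
    rw [Measure.map_apply measurable_fst hA, Measure.restrict_apply (measurable_fst hA),
      ← prod_univ, prod_inter_prod, inter_univ, univ_inter]
  have : IsFiniteMeasure μ := ⟨by rw [hμ MeasurableSet.univ]; exact hfin.lt_top⟩
  refine (Measure.prod_eq fun A B hA hB => ?_).symm
  let νA : Measure ℝ := (ν.restrict (A ×ˢ univ)).map Prod.snd
  have hνA {B : Set ℝ} (hB : MeasurableSet B) : νA B = ν (A ×ˢ B) := by
    rw [Measure.map_apply measurable_snd hB, Measure.restrict_apply (measurable_snd hB),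
      ← univ_prod, prod_inter_prod, inter_univ, univ_inter]
  have hinv : νA.IsAddLeftInvariant := ⟨fun c => by
    ext B hB
    rw [Measure.map_apply (measurable_const_add c) hB, hνA (measurable_const_add c hB), hνA hB]
    nth_rw 2 [← hν c]
    rw [Measure.map_apply (measurable_id.prodMap (measurable_const_add c)) (hA.prod hB),
      preimage_prod_map_prod, preimage_id]⟩
  have hνA_fin : νA (Ioo 0 1) ≠ ∞ := by
    rw [hνA measurableSet_Ioo]
    exact measure_ne_top_of_subset (prod_mono (subset_univ A) Ioo_subset_Ico_self) hfin
  have : IsFiniteMeasureOnCompacts νA := ⟨fun K hK =>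
    measure_lt_top_of_isCompact_of_isAddLeftInvariant _ isOpen_Ioo (nonempty_Ioo.2 one_pos)
      hνA_fin hK⟩
  obtain ⟨c, hc⟩ : ∃ c : ℝ≥0∞, νA = c • volume :=
    ⟨_, Measure.isAddLeftInvariant_eq_smul νA volume⟩
  have hcA : μ A = c := by
    rw [hμ hA, ← hνA measurableSet_Ico, hc]
    simp
  rw [← hνA hB, hc, hcA, Measure.smul_apply, smul_eq_mul]

lemma iUnion_graphRegion_smul (f : Z → ℝ) :
    ⋃ n : ℕ, graphRegion ((-n : ℝ) • f) ((n : ℝ) • f) = Prod.fst ⁻¹' {z | 0 < f z} := by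
  ext ⟨z, t⟩
  simp only [mem_iUnion, graphRegion, mem_ofPred_eq, mem_Ico, mem_preimage, Pi.smul_apply,
    smul_eq_mul]
  refine ⟨fun ⟨n, h⟩ => ?_, fun h => ?_⟩
  · exact pos_of_mul_pos_right (a := (n : ℝ)) (by linarith) n.cast_nonneg
  · obtain ⟨n, hn⟩ := exists_nat_gt (|t| / f z)
    rw [div_lt_iff₀ h] at hn
    exact ⟨n, by linarith [neg_abs_le t], by linarith [le_abs_self t]⟩

lemma iUnion_graphRegion_const (a : ℝ) :
    ⋃ n : ℕ, graphRegion (fun _ : Z => a) (fun _ => a + n) = Prod.snd ⁻¹' Ici a := by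
  ext ⟨z, t⟩
  simp only [mem_iUnion, graphRegion, mem_ofPred_eq, mem_Ico, mem_preimage, mem_Ici]
  refine ⟨fun ⟨_, h, _⟩ => h, fun h => ?_⟩
  obtain ⟨n, hn⟩ := exists_nat_gt (t - a)
  exact ⟨n, h, by linarith⟩

lemma tendsto_smul_sup_zero_inf_one (f : Z → ℝ) (z : Z) :
    Tendsto (fun n : ℕ => (((n : ℝ) • f ⊔ 0) ⊓ 1) z) atTop (𝓝 ({z | 0 < f z}.indicator 1 z)) := by
  by_cases hz : 0 < f z
  · rw [indicator_of_mem (show z ∈ {z | 0 < f z} from hz)]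
    obtain ⟨N, hN⟩ := exists_nat_gt (1 / f z)
    rw [div_lt_iff₀ hz] at hN
    refine tendsto_const_nhds.congr' ?_
    filter_upwards [eventually_ge_atTop N] with n hn
    have : (N : ℝ) * f z ≤ n * f z := by gcongr
    simp only [Pi.inf_apply, Pi.sup_apply, Pi.smul_apply, smul_eq_mul, Pi.one_apply]
    exact (inf_eq_right.2 (le_sup_of_le_left (hN.le.trans this))).symm
  · rw [indicator_of_notMem (show z ∉ {z | 0 < f z} from hz)]
    refine tendsto_const_nhds.congr fun n => ?_
    have : n * f z ≤ 0 := mul_nonpos_of_nonneg_of_nonpos n.cast_nonneg (not_lt.1 hz)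
    simp [this]

variable [mZ : MeasurableSpace Z]

lemma measurable_of_mem_of_eq_iSup_comap (hgen : mZ = ⨆ f ∈ L, .comap f inferInstance)
    {f : Z → ℝ} (hf : f ∈ L) : Measurable f := by
  rw [measurable_iff_comap_le, hgen]
  exact le_iSup₂ (f := fun (g : Z → ℝ) (_ : g ∈ L) => MeasurableSpace.comap g inferInstance) f hf

lemma generateFrom_setOf_pos_eq (h1 : (1 : Z → ℝ) ∈ L)
    (hgen : mZ = ⨆ f ∈ L, .comap f inferInstance) :
    mZ = .generateFrom {S | ∃ f ∈ L, {z | 0 < f z} = S} := by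
  refine le_antisymm ?_ (MeasurableSpace.generateFrom_le ?_)
  · rw [hgen]
    refine iSup₂_le fun f hf => ?_
    rw [BorelSpace.measurable_eq (α := ℝ), borel_eq_generateFrom_Ioi,
      MeasurableSpace.comap_generateFrom]
    refine MeasurableSpace.generateFrom_mono ?_
    rintro _ ⟨_, ⟨a, rfl⟩, rfl⟩
    exact ⟨f - fun _ => a, L.sub_mem hf (const_mem_of_one_mem h1 a), by ext z; simp⟩
  · rintro _ ⟨f, hf, rfl⟩
    exact measurable_of_mem_of_eq_iSup_comap hgen hf measurableSet_Ioi

lemma measurableSet_graphRegion {f g : Z → ℝ} (hf : Measurable f) (hg : Measurable g) :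
    MeasurableSet (graphRegion f g) := by
  have hle : MeasurableSet {p : Z × ℝ | f p.1 ≤ p.2} :=
    measurableSet_le (hf.comp measurable_fst) measurable_snd
  have hlt : MeasurableSet {p : Z × ℝ | p.2 < g p.1} :=
    measurableSet_lt measurable_snd (hg.comp measurable_fst)
  exact hle.inter hlt

lemma prod_volume_graphRegion (μ : Measure Z) {f g : Z → ℝ} (hf : Measurable f)
    (hg : Measurable g) :
    μ.prod volume (graphRegion f g) = ∫⁻ z, ENNReal.ofReal (g z - f z) ∂μ := by
  rw [Measure.prod_apply (measurableSet_graphRegion hf hg)]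
  exact lintegral_congr fun z => Real.volume_Ico (a := f z) (b := g z)

lemma measurableSpace_prod_eq_generateFrom_graphRegions (h1 : (1 : Z → ℝ) ∈ L)
    (hgen : mZ = ⨆ f ∈ L, .comap f inferInstance) :
    (inferInstance : MeasurableSpace (Z × ℝ)) = .generateFrom (graphRegions L) := by
  have hmem {f g : Z → ℝ} (hf : f ∈ L) (hg : g ∈ L) :
      MeasurableSet[.generateFrom (graphRegions L)] (graphRegion f g) :=
    MeasurableSpace.measurableSet_generateFrom ⟨f, hf, g, hg, rfl⟩
  refine le_antisymm (sup_le ?_ ?_) (MeasurableSpace.generateFrom_le ?_)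
  · rw [generateFrom_setOf_pos_eq h1 hgen, MeasurableSpace.comap_generateFrom]
    refine MeasurableSpace.generateFrom_le ?_
    rintro _ ⟨_, ⟨f, hf, rfl⟩, rfl⟩
    rw [← iUnion_graphRegion_smul]
    exact .iUnion fun n => hmem (L.smul_mem _ hf) (L.smul_mem _ hf)
  · rw [BorelSpace.measurable_eq (α := ℝ), borel_eq_generateFrom_Ici,
      MeasurableSpace.comap_generateFrom]
    refine MeasurableSpace.generateFrom_le ?_
    rintro _ ⟨_, ⟨a, rfl⟩, rfl⟩
    rw [← iUnion_graphRegion_const]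
    exact .iUnion fun n => hmem (const_mem_of_one_mem h1 _) (const_mem_of_one_mem h1 _)
  · rintro _ ⟨f, hf, g, hg, rfl⟩
    exact measurableSet_graphRegion (measurable_of_mem_of_eq_iSup_comap hgen hf)
      (measurable_of_mem_of_eq_iSup_comap hgen hg)

namespace IsDaniellIntegral

variable {ℓ : (Z → ℝ) →ₗ[ℝ] ℝ}

/-- The measure on `Z × ℝ` extending the content on graph regions. -/
noncomputable def graphMeasure (hℓ : IsDaniellIntegral L ℓ) (hL : SupClosed (L : Set (Z → ℝ)))
    (h1 : (1 : Z → ℝ) ∈ L) (hgen : mZ = ⨆ f ∈ L, .comap f inferInstance) : Measure (Z × ℝ) :=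
  (hℓ.content hL).measure (isSetSemiring_graphRegions hL)
    (measurableSpace_prod_eq_generateFrom_graphRegions h1 hgen).le
    (hℓ.isSigmaSubadditive_content hL)

section GraphMeasure

variable (hℓ : IsDaniellIntegral L ℓ) (hL : SupClosed (L : Set (Z → ℝ)))
  (h1 : (1 : Z → ℝ) ∈ L) (hgen : mZ = ⨆ f ∈ L, .comap f inferInstance)

lemma graphMeasure_graphRegion {f g : Z → ℝ} (hf : f ∈ L) (hg : g ∈ L) :
    hℓ.graphMeasure hL h1 hgen (graphRegion f g) = ENNReal.ofReal (ℓ ((g - f) ⊔ 0)) := by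
  rw [graphMeasure, AddContent.measure_eq _ _
    (measurableSpace_prod_eq_generateFrom_graphRegions h1 hgen) _ ⟨f, hf, g, hg, rfl⟩,
    ← sectionLength_graphRegion]
  rfl

lemma graphMeasure_graphRegion_zero {f : Z → ℝ} (hf : f ∈ L) (hf0 : 0 ≤ f) :
    hℓ.graphMeasure hL h1 hgen (graphRegion 0 f) = ENNReal.ofReal (ℓ f) := by
  rw [graphMeasure_graphRegion hℓ hL h1 hgen L.zero_mem hf, sub_zero, sup_of_le_left hf0]

lemma map_add_right_graphMeasure (c : ℝ) :
    (hℓ.graphMeasure hL h1 hgen).map (Prod.map id (c + ·)) = hℓ.graphMeasure hL h1 hgen := by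
  have hc := const_mem_of_one_mem h1
  have hpre (f g : Z → ℝ) : Prod.map id (c + ·) ⁻¹' graphRegion f g =
      graphRegion (f - fun _ => c) (g - fun _ => c) := by
    ext p
    simp only [graphRegion, mem_preimage, mem_ofPred_eq, mem_Ico, Prod.map_fst, Prod.map_snd,
      Pi.sub_apply, id]
    grind
  have happly {S} (hS : S ∈ graphRegions L) : (hℓ.graphMeasure hL h1 hgen).map
      (Prod.map id (c + ·)) S = hℓ.graphMeasure hL h1 hgen S := by
    obtain ⟨f, hf, g, hg, rfl⟩ := hS
    rw [Measure.map_apply (measurable_id.prodMap (measurable_const_add c))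
      (measurableSet_graphRegion (measurable_of_mem_of_eq_iSup_comap hgen hf)
        (measurable_of_mem_of_eq_iSup_comap hgen hg)), hpre,
      graphMeasure_graphRegion hℓ hL h1 hgen (L.sub_mem hf (hc c)) (L.sub_mem hg (hc c)),
      graphMeasure_graphRegion hℓ hL h1 hgen hf hg, sub_sub_sub_cancel_right]
  let B (n : ℕ) : Set (Z × ℝ) := graphRegion (fun _ => -n) (fun _ => n)
  have hB (n) : B n ∈ graphRegions L := ⟨_, hc _, _, hc _, rfl⟩
  refine Measure.ext_of_generateFrom_of_iUnion _ B
    (measurableSpace_prod_eq_generateFrom_graphRegions h1 hgen)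
    (isSetSemiring_graphRegions hL).isPiSystem ?_ hB (fun n => ?_) fun S hS => happly hS
  · simpa [B, Pi.smul_def, Pi.neg_def] using iUnion_graphRegion_smul (fun _ : Z => (1 : ℝ))
  · rw [happly (hB n), graphMeasure_graphRegion hℓ hL h1 hgen (hc _) (hc _)]
    exact ENNReal.ofReal_ne_top

end GraphMeasure

theorem exists_measure (hℓ : IsDaniellIntegral L ℓ) (hL : SupClosed (L : Set (Z → ℝ)))
    (h1 : (1 : Z → ℝ) ∈ L) (hgen : mZ = ⨆ f ∈ L, .comap f inferInstance) :
    ∃ μ : Measure Z, IsFiniteMeasure μ ∧ ∀ f ∈ L, Integrable f μ ∧ ∫ z, f z ∂μ = ℓ f := by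
  set ν := hℓ.graphMeasure hL h1 hgen
  have hν01 : ν (univ ×ˢ Ico 0 1) = ENNReal.ofReal (ℓ 1) := by
    rw [← hℓ.graphMeasure_graphRegion_zero hL h1 hgen h1 zero_le_one]
    congr 1
    ext p
    simp [graphRegion]
  set μ := (ν.restrict (univ ×ˢ Ico 0 1)).map Prod.fst
  have hνμ : ν = μ.prod volume := eq_prod_volume_of_map_add_right
    (hℓ.map_add_right_graphMeasure hL h1 hgen) (by rw [hν01]; exact ENNReal.ofReal_ne_top)
  have hμ : IsFiniteMeasure μ := ⟨by
    rw [Measure.map_apply measurable_fst .univ, preimage_univ, Measure.restrict_apply_univ, hν01]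
    exact ENNReal.ofReal_lt_top⟩
  have hlint {f : Z → ℝ} (hf : f ∈ L) (hf0 : 0 ≤ f) :
      ∫⁻ z, ENNReal.ofReal (f z) ∂μ = ENNReal.ofReal (ℓ f) := by
    rw [← hℓ.graphMeasure_graphRegion_zero hL h1 hgen hf hf0]
    change _ = ν _
    rw [hνμ, prod_volume_graphRegion μ measurable_zero
      (measurable_of_mem_of_eq_iSup_comap hgen hf)]
    simp only [Pi.zero_apply, sub_zero]
  have hnonneg {f : Z → ℝ} (hf : f ∈ L) (hf0 : 0 ≤ f) : Integrable f μ ∧ ∫ z, f z ∂μ = ℓ f := by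
    have hm := (measurable_of_mem_of_eq_iSup_comap hgen hf).aestronglyMeasurable (μ := μ)
    refine ⟨⟨hm, ?_⟩, ?_⟩
    · rw [hasFiniteIntegral_iff_ofReal (ae_of_all _ hf0), hlint hf hf0]
      exact ENNReal.ofReal_lt_top
    · rw [integral_eq_lintegral_of_nonneg_ae (ae_of_all _ hf0) hm, hlint hf hf0,
        ENNReal.toReal_ofReal (hℓ.nonneg f hf hf0)]
  refine ⟨μ, hμ, fun f hf => ?_⟩
  obtain ⟨hi₁, he₁⟩ := hnonneg (hL hf L.zero_mem) le_sup_right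
  obtain ⟨hi₂, he₂⟩ := hnonneg (hL (L.neg_mem hf) L.zero_mem) le_sup_right
  have hf_eq : f = (f ⊔ 0) - (-f ⊔ 0) := (posPart_sub_negPart f).symm
  rw [hf_eq, map_sub, ← he₁, ← he₂]
  exact ⟨hi₁.sub hi₂, integral_sub hi₁ hi₂⟩

end IsDaniellIntegral

theorem measure_ext_of_forall_integral_eq (hL : SupClosed (L : Set (Z → ℝ)))
    (h1 : (1 : Z → ℝ) ∈ L) (hgen : mZ = ⨆ f ∈ L, .comap f inferInstance)
    {μ ν : Measure Z} [IsFiniteMeasure μ] [IsFiniteMeasure ν]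
    (h : ∀ f ∈ L, ∫ z, f z ∂μ = ∫ z, f z ∂ν) : μ = ν := by
  have hmeas {f} (hf : f ∈ L) := measurable_of_mem_of_eq_iSup_comap hgen hf
  have hmem {f} (hf : f ∈ L) (n : ℕ) : ((n : ℝ) • f ⊔ 0) ⊓ 1 ∈ L :=
    infClosed_of_supClosed hL (hL (L.smul_mem _ hf) L.zero_mem) h1
  have htend {f} (hf : f ∈ L) (ρ : Measure Z) [IsFiniteMeasure ρ] :
      Tendsto (fun n : ℕ => ∫ z, (((n : ℝ) • f ⊔ 0) ⊓ 1) z ∂ρ) atTop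
        (𝓝 (ρ.real {z | 0 < f z})) := by
    rw [← integral_indicator_one (measurableSet_lt measurable_const (hmeas hf))]
    refine tendsto_integral_of_dominated_convergence 1
      (fun n => (hmeas (hmem hf n)).aestronglyMeasurable) (integrable_const 1)
      (fun n => ae_of_all _ fun z => ?_) (ae_of_all _ (tendsto_smul_sup_zero_inf_one f))
    rw [Real.norm_eq_abs, abs_le]
    exact ⟨le_inf (le_sup_of_le_right (by simp)) (by simp), inf_le_right⟩
  have hreal {f} (hf : f ∈ L) : μ {z | 0 < f z} = ν {z | 0 < f z} := by
    rw [← measureReal_eq_measureReal_iff]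
    exact tendsto_nhds_unique (htend hf μ) ((htend hf ν).congr fun n => (h _ (hmem hf n)).symm)
  refine ext_of_generate_finite _ (generateFrom_setOf_pos_eq h1 hgen) ?_ ?_ ?_
  · rintro _ ⟨f, hf, rfl⟩ _ ⟨g, hg, rfl⟩ -
    exact ⟨f ⊓ g, infClosed_of_supClosed hL hf hg, by ext z; simp⟩
  · rintro _ ⟨f, hf, rfl⟩
    exact hreal hf
  · simpa using hreal h1

end Daniell

section Projection

variable {Y : Type*}

/-- The sequences of natural numbers whose first `k` terms are bounded by those of `b`. -/
def boundedInitial (b : ℕ → ℕ) (k : ℕ) : Set (ℕ → ℕ) := {x | ∀ i < k, x i ≤ b i}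

lemma isCompact_Iic_nat_pi (b : ℕ → ℕ) : IsCompact (Iic b) :=
  Icc_bot (α := ℕ → ℕ) ▸ isCompact_Icc

lemma exists_boundedInitial_subset {b : ℕ → ℕ} {V : Set (ℕ → ℕ)} (hV : IsOpen V)
    (hb : Iic b ⊆ V) : ∃ k, boundedInitial b k ⊆ V := by
  by_contra! h
  choose x hx hxV using fun k => not_subset.1 (h k)
  let y (k i : ℕ) : ℕ := if i < k then x k i else 0
  have hy (k) : y k ∈ Iic b := fun i => by
    by_cases hi : i < k
    · simpa only [y, if_pos hi] using hx k i hi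
    · simp only [y, if_neg hi, zero_le]
  obtain ⟨a, hab, φ, hφ, hya⟩ := (isCompact_Iic_nat_pi b).tendsto_subseq hy
  have hxa : Tendsto (fun n => x (φ n)) atTop (𝓝 a) := by
    rw [tendsto_pi_nhds] at hya ⊢
    refine fun i => (hya i).congr' ?_
    filter_upwards [hφ.tendsto_atTop.eventually_gt_atTop i] with n hn
    exact if_pos hn
  obtain ⟨n, hn⟩ := (hxa.eventually (hV.mem_nhds (hb hab))).exists
  exact hxV (φ n) hn

lemma iInter_closure_image_boundedInitial_subset [TopologicalSpace Y] [T2Space Y]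
    {f : (ℕ → ℕ) → Y} (hf : Continuous f) (b : ℕ → ℕ) :
    ⋂ k, closure (f '' boundedInitial b k) ⊆ f '' Iic b := by
  intro y hy
  by_contra hyK
  obtain ⟨U, V, hU, hV, hKU, hyV, hUV⟩ :=
    ((isCompact_Iic_nat_pi b).image hf).separation_of_notMem hyK
  obtain ⟨k, hk⟩ := exists_boundedInitial_subset (hU.preimage hf) (image_subset_iff.1 hKU)
  exact (hUV.closure_left hV).notMem_of_mem_right hyV
    (closure_mono (image_subset_iff.2 hk) (mem_iInter.1 hy k))

lemma exists_lt_measure_image_boundedInitial [MeasurableSpace Y] (μ : Measure Y)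
    {f : (ℕ → ℕ) → Y} {c : ℝ≥0∞} (hc : c < μ (range f)) :
    ∃ b, ∀ k, c < μ (f '' boundedInitial b k) := by
  have hstep (k : ℕ) (W : Set (ℕ → ℕ)) (hW : c < μ (f '' W)) :
      ∃ n, c < μ (f '' (W ∩ {x | x k ≤ n})) := by
    have hmono : Monotone fun n => f '' (W ∩ {x | x k ≤ n}) := fun m n hmn =>
      image_mono (inter_subset_inter_right _ fun x hx => le_trans hx hmn)
    have hU : ⋃ n, f '' (W ∩ {x | x k ≤ n}) = f '' W := by
      rw [← image_iUnion, ← inter_iUnion,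
        inter_eq_left.2 fun x _ => mem_iUnion.2 ⟨x k, le_refl (x k)⟩]
    rwa [← hU, hmono.measure_iUnion, lt_iSup_iff] at hW
  choose! N hN using hstep
  let W : ℕ → Set (ℕ → ℕ) := Nat.rec univ fun k W => W ∩ {x | x k ≤ N k W}
  have hW (k) : W k = boundedInitial (fun k => N k (W k)) k := by
    induction k with
    | zero => simp [W, boundedInitial]
    | succ k ih =>
      ext x
      change x ∈ W k ∧ _ ↔ _
      nth_rw 1 [ih]
      simp only [boundedInitial, mem_ofPred_eq, Nat.lt_succ_iff_lt_or_eq]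
      grind
  refine ⟨fun k => N k (W k), fun k => ?_⟩
  rw [← hW]
  induction k with
  | zero => simpa [W] using hc
  | succ k ih => exact hN k (W k) ih

lemma exists_isCompact_subset_range_le_measure [TopologicalSpace Y] [T2Space Y]
    [MeasurableSpace Y] [OpensMeasurableSpace Y] (μ : Measure Y) [IsFiniteMeasure μ]
    {f : (ℕ → ℕ) → Y} (hf : Continuous f) {c : ℝ≥0∞} (hc : c < μ (range f)) :
    ∃ K ⊆ range f, IsCompact K ∧ c ≤ μ K := by
  obtain ⟨b, hb⟩ := exists_lt_measure_image_boundedInitial μ hc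
  refine ⟨f '' Iic b, image_subset_range f _, (isCompact_Iic_nat_pi b).image hf, ?_⟩
  have hanti : Antitone fun k => closure (f '' boundedInitial b k) := fun m n hmn =>
    closure_mono (image_mono fun x hx i hi => hx i (hi.trans_le hmn))
  calc c ≤ ⨅ k, μ (closure (f '' boundedInitial b k)) :=
        le_iInf fun k => (hb k).le.trans (measure_mono subset_closure)
    _ = μ (⋂ k, closure (f '' boundedInitial b k)) :=
      (hanti.measure_iInter (fun k => isClosed_closure.measurableSet.nullMeasurableSet)
        ⟨0, measure_ne_top _ _⟩).symm
    _ ≤ μ (f '' Iic b) := measure_mono (iInter_closure_image_boundedInitial_subset hf b)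

theorem nullMeasurableSet_of_analyticSet [TopologicalSpace Y] [T2Space Y] [MeasurableSpace Y]
    [OpensMeasurableSpace Y] (μ : Measure Y) [IsFiniteMeasure μ] {A : Set Y}
    (hA : AnalyticSet A) : NullMeasurableSet A μ := by
  rw [AnalyticSet] at hA
  obtain rfl | ⟨f, hf, rfl⟩ := hA
  · exact nullMeasurableSet_empty
  rcases eq_zero_or_pos (μ (range f)) with h0 | hpos
  · exact NullMeasurableSet.of_null h0
  obtain ⟨c, -, hc, hc_tendsto⟩ := exists_seq_strictMono_tendsto' hpos
  choose K hK hK_compact hcK using fun n =>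
    exists_isCompact_subset_range_le_measure μ hf (hc n).2
  have hK_meas : MeasurableSet (⋃ n, K n) := .iUnion fun n => (hK_compact n).measurableSet
  have hK_sub : ⋃ n, K n ⊆ range f := iUnion_subset hK
  have hle : μ (range f) ≤ μ (⋃ n, K n) := le_of_tendsto' hc_tendsto fun n =>
    (hcK n).trans (measure_mono (subset_iUnion K n))
  exact hK_meas.nullMeasurableSet.congr
    (ae_eq_of_subset_of_measure_ge hK_sub hle hK_meas.nullMeasurableSet (measure_ne_top _ _))

lemma exists_standardBorel_preimage_eq {Ω X : Type*} [MeasurableSpace Ω] [MeasurableSpace X]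
    {D : Set (Ω × X)} (hD : MeasurableSet D) :
    ∃ (Y : Type) (_ : MeasurableSpace Y) (_ : StandardBorelSpace Y) (φ : Ω → Y)
      (D₀ : Set (Y × X)), Measurable φ ∧ MeasurableSet D₀ ∧ D = Prod.map φ id ⁻¹' D₀ := by
  classical
  induction D, hD using MeasurableSpace.induction_on_inter generateFrom_prod.symm
    isPiSystem_prod with
  | empty =>
    exact ⟨Unit, inferInstance, inferInstance, fun _ => (), ∅, measurable_const, .empty, rfl⟩
  | basic D hD =>
    obtain ⟨A, hA, B, hB, rfl⟩ := hD
    refine ⟨Bool, inferInstance, inferInstance, fun ω => decide (ω ∈ A), {true} ×ˢ B,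
      measurable_to_bool ?_, (measurableSet_singleton _).prod hB, ?_⟩
    · simpa [preimage] using hA
    · ext ⟨ω, x⟩
      simp
  | compl D _ ih =>
    obtain ⟨Y, _, _, φ, D₀, hφ, hD₀, rfl⟩ := ih
    exact ⟨Y, _, ‹_›, φ, D₀ᶜ, hφ, hD₀.compl, rfl⟩
  | iUnion D _ _ ih =>
    choose Y hY hYs φ D₀ hφ hD₀ hD_eq using ih
    refine ⟨∀ n, Y n, inferInstance, inferInstance, fun ω n => φ n ω,
      ⋃ n, Prod.map (fun y => y n) id ⁻¹' D₀ n, measurable_pi_lambda _ hφ,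
      .iUnion fun n => ((measurable_pi_apply n).prodMap measurable_id) (hD₀ n), ?_⟩
    rw [preimage_iUnion]
    exact iUnion_congr hD_eq

theorem measurableSet_image_fst {Ω X : Type*} [MeasurableSpace Ω] (P : Measure Ω)
    [IsFiniteMeasure P] [P.IsComplete] [MeasurableSpace X] [StandardBorelSpace X]
    {D : Set (Ω × X)} (hD : MeasurableSet D) : MeasurableSet (Prod.fst '' D) := by
  obtain ⟨Y, _, _, φ, D₀, hφ, hD₀, rfl⟩ := exists_standardBorel_preimage_eq hD
  let := upgradeStandardBorel Y
  let := TopologicalSpace.upgradeIsCompletelyMetrizable Y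
  have hA : AnalyticSet (Prod.fst '' D₀) := hD₀.analyticSet_image measurable_fst
  have hnull := (nullMeasurableSet_of_analyticSet (P.map φ) hA).preimage
    (hφ.quasiMeasurePreserving P)
  have : Prod.fst '' (Prod.map φ id ⁻¹' D₀ : Set (Ω × X)) = φ ⁻¹' (Prod.fst '' D₀) := by
    ext ω
    simp
  rw [this]
  exact hnull.measurable_of_complete

end Projection

section BoundedMeasurable

lemma isBoundedUnder_of_abs_le {u : ℕ → ℝ} {C : ℝ} (h : ∀ n, |u n| ≤ C) :
    IsBoundedUnder (· ≤ ·) atTop u ∧ IsBoundedUnder (· ≥ ·) atTop u :=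
  isBoundedUnder_le_abs.1 (isBoundedUnder_of ⟨C, h⟩)

lemma abs_limsup_le {u : ℕ → ℝ} {C : ℝ} (h : ∀ n, |u n| ≤ C) : |limsup u atTop| ≤ C := by
  obtain ⟨hle, hge⟩ := isBoundedUnder_of_abs_le h
  exact abs_le.2
    ⟨le_limsup_of_frequently_le (Frequently.of_forall fun n => (abs_le.1 (h n)).1) hle,
      limsup_le_of_le hge.isCoboundedUnder_le (Eventually.of_forall fun n => (abs_le.1 (h n)).2)⟩

lemma limsup_le_limsup_of_abs_le {u v : ℕ → ℝ} {C D : ℝ} (hu : ∀ n, |u n| ≤ C)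
    (hv : ∀ n, |v n| ≤ D) (h : ∀ n, u n ≤ v n) : limsup u atTop ≤ limsup v atTop :=
  limsup_le_limsup (Eventually.of_forall h) (isBoundedUnder_of_abs_le hu).2.isCoboundedUnder_le
    (isBoundedUnder_of_abs_le hv).1

lemma limsup_add_le_of_abs_le {u v : ℕ → ℝ} {C D : ℝ} (hu : ∀ n, |u n| ≤ C)
    (hv : ∀ n, |v n| ≤ D) : limsup (u + v) atTop ≤ limsup u atTop + limsup v atTop :=
  limsup_add_le (isBoundedUnder_of_abs_le hu).2 (isBoundedUnder_of_abs_le hu).1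
    (isBoundedUnder_of_abs_le hv).2.isCoboundedUnder_le (isBoundedUnder_of_abs_le hv).1

lemma limsup_le_of_tendsto_sub {u v : ℕ → ℝ} {C D : ℝ} (hu : ∀ n, |u n| ≤ C)
    (hv : ∀ n, |v n| ≤ D) (h : Tendsto (fun n => v n - u n) atTop (𝓝 0)) :
    limsup v atTop ≤ limsup u atTop := by
  have hvu (n : ℕ) : |(v - u) n| ≤ D + C := (abs_sub _ _).trans (add_le_add (hv n) (hu n))
  simpa [add_sub_cancel, show limsup (v - u) atTop = 0 from h.limsup_eq] using
    limsup_add_le_of_abs_le hu hvu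

variable {Y Z : Type*}

lemma abs_birkhoffAverage_le {S : Z → Z} {f : Z → ℝ} {C : ℝ} (hC : ∀ z, |f z| ≤ C) (n : ℕ)
    (z : Z) : |birkhoffAverage ℝ S f n z| ≤ C := by
  rcases n.eq_zero_or_pos with rfl | hn
  · simpa using (abs_nonneg _).trans (hC z)
  have hsum : |birkhoffSum S f n z| ≤ n * C :=
    (Finset.abs_sum_le_sum_abs _ _).trans <| by
      simpa using Finset.sum_le_card_nsmul (Finset.range n) (fun k => |f (S^[k] z)|) C
        fun k _ => hC _
  rwa [birkhoffAverage, smul_eq_mul, inv_mul_eq_div, abs_div, Nat.abs_cast,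
    div_le_iff₀' (by positivity)]

lemma abs_indicator_one_le (A : Set Z) (z : Z) : |A.indicator (1 : Z → ℝ) z| ≤ 1 := by
  by_cases hz : z ∈ A <;> simp [hz]

variable [MeasurableSpace Y] [MeasurableSpace Z] {f : Z → ℝ}

/-- The bounded measurable real functions. -/
def boundedMeasurable (Z : Type*) [MeasurableSpace Z] : Submodule ℝ (Z → ℝ) where
  carrier := {f | Measurable f ∧ ∃ C, ∀ z, |f z| ≤ C}
  zero_mem' := ⟨measurable_const, 0, by simp⟩
  add_mem' := by
    rintro f g ⟨hf, C, hC⟩ ⟨hg, D, hD⟩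
    exact ⟨hf.add hg, C + D, fun z => (abs_add_le _ _).trans (add_le_add (hC z) (hD z))⟩
  smul_mem' := by
    rintro c f ⟨hf, C, hC⟩
    refine ⟨hf.const_smul c, |c| * C, fun z => ?_⟩
    rw [Pi.smul_apply, smul_eq_mul, abs_mul]
    exact mul_le_mul_of_nonneg_left (hC z) (abs_nonneg c)

lemma comp_mem_boundedMeasurable (hf : f ∈ boundedMeasurable Z) {φ : Y → Z} (hφ : Measurable φ) :
    f ∘ φ ∈ boundedMeasurable Y :=
  ⟨hf.1.comp hφ, hf.2.imp fun _ h _ => h _⟩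

lemma const_mem_boundedMeasurable (c : ℝ) : (fun _ => c) ∈ boundedMeasurable Z :=
  ⟨measurable_const, |c|, fun _ => le_rfl⟩

lemma indicator_one_mem_boundedMeasurable {A : Set Z} (hA : MeasurableSet A) :
    A.indicator (1 : Z → ℝ) ∈ boundedMeasurable Z :=
  ⟨measurable_one.indicator hA, 1, abs_indicator_one_le A⟩

lemma limsup_mem_boundedMeasurable {u : ℕ → Z → ℝ} (hu : ∀ n, Measurable (u n)) {C : ℝ}
    (hC : ∀ n z, |u n z| ≤ C) : (fun z => limsup (fun n => u n z) atTop) ∈ boundedMeasurable Z :=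
  ⟨Measurable.limsup hu, C, fun z => abs_limsup_le fun n => hC n z⟩

lemma birkhoffAverage_mem_boundedMeasurable {S : Z → Z} (hS : Measurable S)
    (hf : f ∈ boundedMeasurable Z) (n : ℕ) :
    birkhoffAverage ℝ S f n ∈ boundedMeasurable Z := by
  obtain ⟨hfm, C, hC⟩ := hf
  have hsum : Measurable (birkhoffSum S f n) :=
    Finset.measurable_sum _ fun k _ => hfm.comp (hS.iterate k)
  exact ⟨hsum.const_smul (n : ℝ)⁻¹, C, abs_birkhoffAverage_le hC n⟩

lemma limsup_birkhoffAverage_mem_boundedMeasurable {S : Z → Z} (hS : Measurable S)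
    (hf : f ∈ boundedMeasurable Z) :
    (fun z => limsup (fun n => birkhoffAverage ℝ S f n z) atTop) ∈ boundedMeasurable Z :=
  let ⟨_, hC⟩ := hf.2
  limsup_mem_boundedMeasurable (fun n => (birkhoffAverage_mem_boundedMeasurable hS hf n).1)
    (abs_birkhoffAverage_le hC)

lemma integrable_of_mem_boundedMeasurable {μ : Measure Z} [IsFiniteMeasure μ]
    (hf : f ∈ boundedMeasurable Z) : Integrable f μ :=
  let ⟨hm, C, hC⟩ := hf
  Integrable.of_bound hm.aestronglyMeasurable C (Eventually.of_forall hC)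

end BoundedMeasurable

section Ergodic

variable {Ω : Type*} {θ : Ω → Ω} {h g : Ω → ℝ}

lemma partialSups_birkhoffSum_le_max (θ : Ω → Ω) (h : Ω → ℝ) (N : ℕ) (ω : Ω) :
    partialSups (birkhoffSum θ h) N ω ≤
      max 0 (h ω + partialSups (birkhoffSum θ h) N (θ ω)) := by
  rw [Pi.partialSups_apply]
  refine partialSups_le _ _ _ fun n hn => ?_
  rcases n with _ | n
  · simp
  · rw [birkhoffSum_succ']
    have hθω : birkhoffSum θ h n (θ ω) ≤ partialSups (birkhoffSum θ h) N (θ ω) :=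
      le_partialSups_of_le (birkhoffSum θ h) (Nat.le_of_succ_le hn) (θ ω)
    exact le_max_of_le_right (by gcongr)

lemma partialSups_birkhoffSum_nonneg (θ : Ω → Ω) (h : Ω → ℝ) (N : ℕ) (ω : Ω) :
    0 ≤ partialSups (birkhoffSum θ h) N ω := by
  simpa using le_partialSups_of_le (birkhoffSum θ h) (Nat.zero_le N) ω

lemma setOf_partialSups_birkhoffSum_pos (θ : Ω → Ω) (h : Ω → ℝ) (N : ℕ) :
    {ω | 0 < partialSups (birkhoffSum θ h) N ω} = ⋃ n ≤ N, {ω | 0 < birkhoffSum θ h n ω} := by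
  ext ω
  simp [Pi.partialSups_apply, partialSups_apply]

lemma limsup_birkhoffAverage_apply (hg : ∃ C, ∀ ω, |g ω| ≤ C) (ω : Ω) :
    limsup (fun n => birkhoffAverage ℝ θ g n (θ ω)) atTop =
      limsup (fun n => birkhoffAverage ℝ θ g n ω) atTop := by
  obtain ⟨C, hC⟩ := hg
  have hA (ω : Ω) (n : ℕ) : |birkhoffAverage ℝ θ g n ω| ≤ C := abs_birkhoffAverage_le hC n ω
  have ht := tendsto_birkhoffAverage_apply_sub_birkhoffAverage ℝ (f := θ) (g := g) (x := ω)
    ((Metric.isBounded_closedBall (x := (0 : ℝ)) (r := C)).subset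
      (range_subset_iff.2 fun n => by simpa using hC _))
  refine le_antisymm (limsup_le_of_tendsto_sub (hA _) (hA _) ht)
    (limsup_le_of_tendsto_sub (hA _) (hA _) ?_)
  simpa using ht.neg

variable [MeasurableSpace Ω] {P : Measure Ω}

lemma integrable_partialSups_birkhoffSum (hθ : MeasurePreserving θ P P) (hh : Integrable h P)
    (N : ℕ) : Integrable (partialSups (birkhoffSum θ h) N) P := by
  have hsum (n : ℕ) : Integrable (birkhoffSum θ h n) P :=
    integrable_finsetSum _ fun k _ => (hθ.iterate k).integrable_comp_of_integrable hh
  induction N with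
  | zero => simp
  | succ N ih => simpa [partialSups_add_one] using ih.sup (hsum (N + 1))

lemma measurableSet_partialSups_birkhoffSum_pos (hθ : Measurable θ) (hh : Measurable h) (N : ℕ) :
    MeasurableSet {ω | 0 < partialSups (birkhoffSum θ h) N ω} := by
  rw [setOf_partialSups_birkhoffSum_pos]
  exact .iUnion fun n => .iUnion fun _ => measurableSet_lt measurable_const <|
    Finset.measurable_sum _ fun k _ => hh.comp (hθ.iterate k)

lemma setIntegral_partialSups_birkhoffSum_pos_nonneg (hθ : MeasurePreserving θ P P)
    (hhm : Measurable h) (hh : Integrable h P) (N : ℕ) :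
    0 ≤ ∫ ω in {ω | 0 < partialSups (birkhoffSum θ h) N ω}, h ω ∂P := by
  set M := partialSups (birkhoffSum θ h) N
  have hA := measurableSet_partialSups_birkhoffSum_pos hθ.measurable hhm N
  have hM : Integrable M P := integrable_partialSups_birkhoffSum hθ hh N
  have hMθ : Integrable (M ∘ θ) P := hθ.integrable_comp_of_integrable hM
  have hle (ω : Ω) : M ω - M (θ ω) ≤ {ω | 0 < M ω}.indicator h ω := by
    have hmax : M ω ≤ max 0 (h ω + M (θ ω)) := partialSups_birkhoffSum_le_max θ h N ω
    have hnn : 0 ≤ M (θ ω) := partialSups_birkhoffSum_nonneg θ h N (θ ω)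
    rcases lt_or_ge 0 (M ω) with hω | hω
    · rw [indicator_of_mem (by exact hω), sub_le_iff_le_add]
      exact (le_max_iff.1 hmax).resolve_left hω.not_ge
    · rw [indicator_of_notMem (by exact hω.not_gt)]
      linarith
  calc 0 = ∫ ω, (M ω - M (θ ω)) ∂P := by
        rw [integral_sub hM (g := fun ω => M (θ ω)) hMθ, ← integral_map hθ.aemeasurable
          (by rw [hθ.map_eq]; exact hM.aestronglyMeasurable), hθ.map_eq, sub_self]
    _ ≤ ∫ ω, {ω | 0 < M ω}.indicator h ω ∂P := integral_mono (hM.sub hMθ) (hh.indicator hA) hle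
    _ = ∫ ω in {ω | 0 < M ω}, h ω ∂P := integral_indicator hA

theorem setIntegral_exists_birkhoffSum_pos_nonneg (hθ : MeasurePreserving θ P P)
    (hhm : Measurable h) (hh : Integrable h P) :
    0 ≤ ∫ ω in {ω | ∃ n, 0 < birkhoffSum θ h n ω}, h ω ∂P := by
  set A : ℕ → Set Ω := fun N => {ω | 0 < partialSups (birkhoffSum θ h) N ω}
  have hA : Monotone A := fun N N' hN ω hω =>
    lt_of_lt_of_le hω ((partialSups (birkhoffSum θ h)).monotone hN ω)
  have hU : {ω | ∃ n, 0 < birkhoffSum θ h n ω} = ⋃ N, A N := by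
    ext ω
    simp only [A, setOf_partialSups_birkhoffSum_pos, mem_iUnion, exists_prop]
    exact ⟨fun ⟨n, hn⟩ => ⟨n, n, le_rfl, hn⟩, fun ⟨_, n, _, hn⟩ => ⟨n, hn⟩⟩
  rw [hU]
  exact ge_of_tendsto' (tendsto_setIntegral_of_monotone
    (measurableSet_partialSups_birkhoffSum_pos hθ.measurable hhm) hA hh.integrableOn)
    (setIntegral_partialSups_birkhoffSum_pos_nonneg hθ hhm hh)

variable [IsProbabilityMeasure P]

theorem integral_limsup_birkhoffAverage_le (hθ : MeasurePreserving θ P P)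
    (hg : g ∈ boundedMeasurable Ω) :
    ∫ ω, limsup (fun n => birkhoffAverage ℝ θ g n ω) atTop ∂P ≤ ∫ ω, g ω ∂P := by
  set G : Ω → ℝ := fun ω => limsup (fun n => birkhoffAverage ℝ θ g n ω) atTop
  have hG : G ∈ boundedMeasurable Ω :=
    limsup_birkhoffAverage_mem_boundedMeasurable hθ.measurable hg
  refine le_of_forall_pos_le_add fun ε hε => ?_
  have hGε : G - (fun _ => ε) ∈ boundedMeasurable Ω :=
    sub_mem hG (const_mem_boundedMeasurable ε)
  have hh := sub_mem hg hGε
  have hpos (ω : Ω) : ∃ n, 0 < birkhoffSum θ (g - (G - fun _ => ε)) n ω := by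
    obtain ⟨C, hC⟩ := hg.2
    obtain ⟨n, hn, hn1⟩ := ((frequently_lt_of_lt_limsup
      (isBoundedUnder_of_abs_le (abs_birkhoffAverage_le hC · ω)).2.isCoboundedUnder_le
      (sub_lt_self (G ω) hε)).and_eventually (eventually_ge_atTop 1)).exists
    have hinv : (G - fun _ => ε) ∘ θ = G - fun _ => ε :=
      funext fun ω => congrArg (· - ε) (limsup_birkhoffAverage_apply hg.2 ω)
    refine ⟨n, ?_⟩
    rw [birkhoffSum_sub, birkhoffSum_of_comp_eq hinv, sub_pos]
    rw [birkhoffAverage, smul_eq_mul, inv_mul_eq_div, lt_div_iff₀' (by positivity)] at hn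
    simpa using hn
  have key := setIntegral_exists_birkhoffSum_pos_nonneg hθ hh.1
    (integrable_of_mem_boundedMeasurable (μ := P) hh)
  have hGi : Integrable G P := integrable_of_mem_boundedMeasurable hG
  have huniv : {ω | ∃ n, 0 < birkhoffSum θ (g - (G - fun _ => ε)) n ω} = univ :=
    eq_univ_of_forall hpos
  rw [huniv, setIntegral_univ, integral_sub' (integrable_of_mem_boundedMeasurable hg)
    (integrable_of_mem_boundedMeasurable hGε), integral_sub' hGi (integrable_const ε),
    integral_const, probReal_univ, one_smul] at key
  linarith

theorem le_integral_limsup_birkhoffAverage (hθ : MeasurePreserving θ P P)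
    (hg : g ∈ boundedMeasurable Ω) :
    ∫ ω, g ω ∂P ≤ ∫ ω, limsup (fun n => birkhoffAverage ℝ θ g n ω) atTop ∂P := by
  obtain ⟨C, hC⟩ := hg.2
  have hneg (ω : Ω) : -limsup (fun n => birkhoffAverage ℝ θ g n ω) atTop ≤
      limsup (fun n => birkhoffAverage ℝ θ (-g) n ω) atTop := by
    have := limsup_add_le_of_abs_le (u := fun n => birkhoffAverage ℝ θ g n ω)
      (v := fun n => birkhoffAverage ℝ θ (-g) n ω) (abs_birkhoffAverage_le hC · ω)
      (abs_birkhoffAverage_le (f := -g) (by simpa using hC) · ω)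
    have hzero : ((fun n => birkhoffAverage ℝ θ g n ω) +
        fun n => birkhoffAverage ℝ θ (-g) n ω) = fun _ => 0 := by
      ext n
      simp [birkhoffAverage_neg]
    rw [hzero, limsup_const] at this
    linarith
  have hint {g : Ω → ℝ} (hg : g ∈ boundedMeasurable Ω) :=
    integrable_of_mem_boundedMeasurable (μ := P)
      (limsup_birkhoffAverage_mem_boundedMeasurable hθ.measurable hg)
  have := (integral_mono (hint hg).neg (hint (neg_mem hg)) hneg).trans
    (integral_limsup_birkhoffAverage_le hθ (neg_mem hg))
  simp only [Pi.neg_apply, integral_neg] at this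
  exact neg_le_neg_iff.1 this

end Ergodic

section FiberSup

variable {Ω X : Type*}

/-- The supremum of `f` over the fiber of `E`. -/
noncomputable def fiberSup (E : Set (Ω × X)) (f : Ω × X → ℝ) (ω : Ω) : ℝ :=
  ⨆ x : fiber E ω, f (ω, x)

variable {E : Set (Ω × X)} {f g : Ω × X → ℝ} {C D : ℝ} {ω : Ω}

lemma fiberSup_le (hne : (fiber E ω).Nonempty) {a : ℝ}
    (h : ∀ x ∈ fiber E ω, f (ω, x) ≤ a) : fiberSup E f ω ≤ a :=
  have := hne.to_subtype
  ciSup_le fun x => h x x.2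

lemma le_fiberSup (hC : ∀ z, |f z| ≤ C) {z : Ω × X} (hz : z ∈ E) : f z ≤ fiberSup E f z.1 :=
  le_ciSup (f := fun x : fiber E z.1 => f (z.1, x))
    ⟨C, forall_mem_range.2 fun _ => (abs_le.1 (hC _)).2⟩ ⟨z.2, hz⟩

lemma lt_fiberSup_iff (hne : (fiber E ω).Nonempty) (hC : ∀ z, |f z| ≤ C) {a : ℝ} :
    a < fiberSup E f ω ↔ ∃ x ∈ fiber E ω, a < f (ω, x) := by
  refine ⟨fun h => ?_, fun ⟨x, hx, h⟩ => h.trans_le (le_fiberSup hC hx)⟩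
  by_contra! h'
  exact h.not_ge (fiberSup_le hne h')

lemma abs_fiberSup_le (hne : (fiber E ω).Nonempty) (hC : ∀ z, |f z| ≤ C) :
    |fiberSup E f ω| ≤ C := by
  obtain ⟨x, hx⟩ := hne
  exact abs_le.2 ⟨(abs_le.1 (hC _)).1.trans (le_fiberSup hC hx),
    fiberSup_le ⟨x, hx⟩ fun x _ => (abs_le.1 (hC _)).2⟩

lemma fiberSup_add_le (hne : (fiber E ω).Nonempty) (hC : ∀ z, |f z| ≤ C)
    (hD : ∀ z, |g z| ≤ D) :
    fiberSup E (f + g) ω ≤ fiberSup E f ω + fiberSup E g ω :=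
  fiberSup_le hne fun _ hx => add_le_add (le_fiberSup hC hx) (le_fiberSup hD hx)

lemma fiberSup_smul {c : ℝ} (hc : 0 ≤ c) (f : Ω × X → ℝ) (ω : Ω) :
    fiberSup E (c • f) ω = c * fiberSup E f ω :=
  (Real.mul_iSup_of_nonneg hc _).symm

lemma fiberSup_mem_boundedMeasurable [MeasurableSpace Ω] [MeasurableSpace X]
    [StandardBorelSpace X] (P : Measure Ω) [IsFiniteMeasure P] [P.IsComplete]
    (hE : MeasurableSet E) (hne : ∀ ω, (fiber E ω).Nonempty)
    (hf : f ∈ boundedMeasurable (Ω × X)) : fiberSup E f ∈ boundedMeasurable Ω := by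
  obtain ⟨hm, C, hC⟩ := hf
  refine ⟨measurable_of_Ioi fun a => ?_, C, fun ω => abs_fiberSup_le (hne ω) hC⟩
  have hpre : fiberSup E f ⁻¹' Ioi a = Prod.fst '' (E ∩ f ⁻¹' Ioi a) := by
    ext ω
    simp [lt_fiberSup_iff (hne ω) hC, fiber]
  rw [hpre]
  exact measurableSet_image_fst P (hE.inter (hm measurableSet_Ioi))

end FiberSup

section UpperMean

lemma birkhoffAverage_smul {Z : Type*} (S : Z → Z) (f : Z → ℝ) (c : ℝ) (n : ℕ) :
    birkhoffAverage ℝ S (c • f) n = c • birkhoffAverage ℝ S f n := by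
  ext z
  simp only [birkhoffAverage, birkhoffSum, Pi.smul_apply, ← Finset.smul_sum, smul_comm c]

lemma birkhoffAverage_comp_sub {Z : Type*} (S : Z → Z) (f : Z → ℝ) (n : ℕ) (z : Z) :
    birkhoffAverage ℝ S (f ∘ S - f) n z = (n : ℝ)⁻¹ * (f (S^[n] z) - f z) := by
  have hcomp : birkhoffAverage ℝ S (f ∘ S) n z = birkhoffAverage ℝ S f n (S z) := by
    simp only [birkhoffAverage, birkhoffSum, Function.comp_apply, ← Function.iterate_succ_apply,
      ← Function.iterate_succ_apply']
  simp only [birkhoffAverage_sub, Pi.sub_apply, hcomp]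
  rw [birkhoffAverage_apply_sub_birkhoffAverage, smul_eq_mul]

variable {Ω X : Type*}

/-- The skew product of a bundle random dynamical system, on all of `Ω × X`. -/
def skew (T : Ω → X → X) (θ : Ω → Ω) : Ω × X → Ω × X := fun p => (θ p.1, T p.1 p.2)

/-- The asymptotic supremum of the Birkhoff averages of `f` along the orbits that start in the
fiber over `ω`. -/
noncomputable def upperMean (T : Ω → X → X) (θ : Ω → Ω) (E : Set (Ω × X)) (f : Ω × X → ℝ)
    (ω : Ω) : ℝ :=
  limsup (fun n => fiberSup E (birkhoffAverage ℝ (skew T θ) f n) ω) atTop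

variable {T : Ω → X → X} {θ : Ω → Ω} {E : Set (Ω × X)} {f g : Ω × X → ℝ} {C D : ℝ}

lemma iterate_skew (n : ℕ) (ω : Ω) (x : X) :
    (skew T θ)^[n] (ω, x) = (θ^[n] ω, itr T θ n ω x) := by
  induction n generalizing ω x with
  | zero => rfl
  | succ _ ih => exact ih (θ ω) (T ω x)

lemma measurable_skew [MeasurableSpace Ω] [MeasurableSpace X] (hθ : Measurable θ)
    (hT : Measurable fun p : Ω × X => T p.1 p.2) : Measurable (skew T θ) :=
  (hθ.comp measurable_fst).prodMk hT

lemma ae_iterate_skew_mem [MeasurableSpace Ω] {P : Measure Ω} (hθ : MeasurePreserving θ P P)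
    (hT : ∀ᵐ ω ∂P, MapsTo (T ω) (fiber E ω) (fiber E (θ ω))) :
    ∀ᵐ ω ∂P, ∀ x ∈ fiber E ω, ∀ n, (skew T θ)^[n] (ω, x) ∈ E := by
  have h : ∀ᵐ ω ∂P, ∀ n, MapsTo (T (θ^[n] ω)) (fiber E (θ^[n] ω)) (fiber E (θ (θ^[n] ω))) :=
    ae_all_iff.2 fun n => (hθ.iterate n).quasiMeasurePreserving.ae hT
  refine h.mono fun ω hω x hx n => ?_
  induction n with
  | zero => exact hx
  | succ n ih =>
    rw [iterate_skew] at ih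
    rw [Function.iterate_succ_apply', iterate_skew]
    exact hω n ih

lemma abs_fiberSup_birkhoffAverage_le {ω : Ω} (hne : (fiber E ω).Nonempty)
    (hC : ∀ z, |f z| ≤ C) (n : ℕ) : |fiberSup E (birkhoffAverage ℝ (skew T θ) f n) ω| ≤ C :=
  abs_fiberSup_le hne (abs_birkhoffAverage_le hC n)

lemma upperMean_add_le {ω : Ω} (hne : (fiber E ω).Nonempty) (hC : ∀ z, |f z| ≤ C)
    (hD : ∀ z, |g z| ≤ D) :
    upperMean T θ E (f + g) ω ≤ upperMean T θ E f ω + upperMean T θ E g ω := by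
  have hf := abs_fiberSup_birkhoffAverage_le (T := T) (θ := θ) hne hC
  have hg := abs_fiberSup_birkhoffAverage_le (T := T) (θ := θ) hne hD
  have hfg := abs_fiberSup_birkhoffAverage_le (T := T) (θ := θ) (f := f + g) hne
    (fun z => (abs_add_le _ _).trans (add_le_add (hC z) (hD z)))
  refine (limsup_le_limsup_of_abs_le hfg
    (fun n => (abs_add_le _ _).trans (add_le_add (hf n) (hg n))) fun n => ?_).trans
    (limsup_add_le_of_abs_le hf hg)
  rw [birkhoffAverage_add]
  exact fiberSup_add_le hne (abs_birkhoffAverage_le hC n) (abs_birkhoffAverage_le hD n)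

lemma upperMean_smul {ω : Ω} (hne : (fiber E ω).Nonempty) (hC : ∀ z, |f z| ≤ C) {c : ℝ}
    (hc : 0 ≤ c) : upperMean T θ E (c • f) ω = c * upperMean T θ E f ω := by
  obtain ⟨hle, hge⟩ :=
    isBoundedUnder_of_abs_le (abs_fiberSup_birkhoffAverage_le (T := T) (θ := θ) hne hC)
  simp only [upperMean, birkhoffAverage_smul, fiberSup_smul hc]
  exact ((monotone_mul_left_of_nonneg hc).map_limsup_of_continuousAt _
    (continuous_const_mul c).continuousAt hle hge.isCoboundedUnder_le).symm

lemma upperMean_comp_skew_sub_nonpos {ω : Ω} (hne : (fiber E ω).Nonempty)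
    (hC : ∀ z, |f z| ≤ C) : upperMean T θ E (f ∘ skew T θ - f) ω ≤ 0 := by
  have hlim : Tendsto (fun n : ℕ => (n : ℝ)⁻¹ * (C + C)) atTop (𝓝 0) := by
    simpa using (tendsto_inv_atTop_nhds_zero_nat (𝕜 := ℝ)).mul_const (C + C)
  have hsub (z : Ω × X) : |(f ∘ skew T θ - f) z| ≤ C + C :=
    (abs_sub _ _).trans (add_le_add (hC _) (hC z))
  rw [← hlim.limsup_eq]
  refine limsup_le_limsup (Eventually.of_forall fun n => fiberSup_le hne fun x _ => ?_)
    (isBoundedUnder_of_abs_le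
      (abs_fiberSup_birkhoffAverage_le hne hsub)).2.isCoboundedUnder_le hlim.isBoundedUnder_le
  rw [birkhoffAverage_comp_sub]
  exact mul_le_mul_of_nonneg_left ((le_abs_self _).trans ((abs_sub _ _).trans
    (add_le_add (hC _) (hC _)))) (by positivity)

lemma upperMean_le_limsup_birkhoffAverage_fiberSup (hne : ∀ ω, (fiber E ω).Nonempty)
    (hC : ∀ z, |f z| ≤ C) {ω : Ω} (hω : ∀ x ∈ fiber E ω, ∀ n, (skew T θ)^[n] (ω, x) ∈ E) :
    upperMean T θ E f ω ≤ limsup (fun n => birkhoffAverage ℝ θ (fiberSup E f) n ω) atTop := by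
  refine limsup_le_limsup_of_abs_le (abs_fiberSup_birkhoffAverage_le (hne ω) hC)
    (abs_birkhoffAverage_le (fun ω => abs_fiberSup_le (hne ω) hC) · ω)
    fun n => fiberSup_le (hne ω) fun x hx => ?_
  unfold birkhoffAverage birkhoffSum
  gcongr with k
  simpa only [iterate_skew] using le_fiberSup hC (hω x hx k)

lemma limsup_birkhoffAverage_le_upperMean (hC : ∀ z, |f z| ≤ C) {z : Ω × X} (hz : z ∈ E) :
    limsup (fun n => birkhoffAverage ℝ (skew T θ) f n z) atTop ≤ upperMean T θ E f z.1 :=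
  limsup_le_limsup_of_abs_le (abs_birkhoffAverage_le hC · z)
    (abs_fiberSup_birkhoffAverage_le ⟨z.2, hz⟩ hC)
    fun n => le_fiberSup (abs_birkhoffAverage_le hC n) hz

variable [MeasurableSpace Ω] [MeasurableSpace X] {P : Measure Ω}

lemma integral_upperMean_smul (hne : ∀ ω, (fiber E ω).Nonempty)
    (hf : f ∈ boundedMeasurable (Ω × X)) {c : ℝ} (hc : 0 ≤ c) :
    ∫ ω, upperMean T θ E (c • f) ω ∂P = c * ∫ ω, upperMean T θ E f ω ∂P := by
  obtain ⟨C, hC⟩ := hf.2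
  rw [← integral_const_mul]
  exact integral_congr_ae (ae_of_all _ fun ω => upperMean_smul (hne ω) hC hc)

variable [StandardBorelSpace X]

lemma upperMean_mem_boundedMeasurable (P : Measure Ω) [IsFiniteMeasure P] [P.IsComplete]
    (hE : MeasurableSet E) (hne : ∀ ω, (fiber E ω).Nonempty) (hS : Measurable (skew T θ))
    (hf : f ∈ boundedMeasurable (Ω × X)) : upperMean T θ E f ∈ boundedMeasurable Ω :=
  let ⟨_, hC⟩ := hf.2
  limsup_mem_boundedMeasurable
    (fun n => (fiberSup_mem_boundedMeasurable P hE hne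
      (birkhoffAverage_mem_boundedMeasurable hS hf n)).1)
    fun n ω => abs_fiberSup_birkhoffAverage_le (hne ω) hC n

variable [P.IsComplete] [IsProbabilityMeasure P]

lemma integrable_upperMean (hE : MeasurableSet E) (hne : ∀ ω, (fiber E ω).Nonempty)
    (hS : Measurable (skew T θ)) (hf : f ∈ boundedMeasurable (Ω × X)) :
    Integrable (upperMean T θ E f) P :=
  integrable_of_mem_boundedMeasurable (upperMean_mem_boundedMeasurable P hE hne hS hf)

lemma integral_upperMean_add_le (hE : MeasurableSet E) (hne : ∀ ω, (fiber E ω).Nonempty)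
    (hS : Measurable (skew T θ)) (hf : f ∈ boundedMeasurable (Ω × X))
    (hg : g ∈ boundedMeasurable (Ω × X)) :
    ∫ ω, upperMean T θ E (f + g) ω ∂P ≤
      ∫ ω, upperMean T θ E f ω ∂P + ∫ ω, upperMean T θ E g ω ∂P := by
  obtain ⟨C, hC⟩ := hf.2
  obtain ⟨D, hD⟩ := hg.2
  have hif := integrable_upperMean (P := P) hE hne hS hf
  have hig := integrable_upperMean (P := P) hE hne hS hg
  rw [← integral_add hif hig]
  exact integral_mono (integrable_upperMean hE hne hS (add_mem hf hg)) (hif.add hig)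
    fun ω => upperMean_add_le (hne ω) hC hD

lemma integral_upperMean_le_integral_fiberSup (hE : MeasurableSet E)
    (hne : ∀ ω, (fiber E ω).Nonempty) (hθ : MeasurePreserving θ P P) (hS : Measurable (skew T θ))
    (hT : ∀ᵐ ω ∂P, MapsTo (T ω) (fiber E ω) (fiber E (θ ω)))
    (hf : f ∈ boundedMeasurable (Ω × X)) :
    ∫ ω, upperMean T θ E f ω ∂P ≤ ∫ ω, fiberSup E f ω ∂P := by
  obtain ⟨C, hC⟩ := hf.2
  have hb := fiberSup_mem_boundedMeasurable P hE hne hf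
  calc ∫ ω, upperMean T θ E f ω ∂P
      ≤ ∫ ω, limsup (fun n => birkhoffAverage ℝ θ (fiberSup E f) n ω) atTop ∂P :=
        integral_mono_ae (integrable_upperMean hE hne hS hf) (integrable_of_mem_boundedMeasurable
          (limsup_birkhoffAverage_mem_boundedMeasurable hθ.measurable hb))
          ((ae_iterate_skew_mem hθ hT).mono
            fun _ => upperMean_le_limsup_birkhoffAverage_fiberSup hne hC)
    _ ≤ ∫ ω, fiberSup E f ω ∂P := integral_limsup_birkhoffAverage_le hθ hb

/-- The set of invariant probability measures of the skew product that are supported by `E` and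
have marginal `P`. -/
def invariantMeasures (P : Measure Ω) (T : Ω → X → X) (θ : Ω → Ω) (E : Set (Ω × X)) :
    Set (Measure (Ω × X)) :=
  {μ | IsProbabilityMeasure μ ∧ μ.map Prod.fst = P ∧ μ E = 1 ∧ μ.map (skew T θ) = μ}

lemma integral_le_integral_upperMean (hE : MeasurableSet E) (hne : ∀ ω, (fiber E ω).Nonempty)
    (hS : Measurable (skew T θ)) {μ : Measure (Ω × X)} (hμ : μ ∈ invariantMeasures P T θ E)
    (hf : f ∈ boundedMeasurable (Ω × X)) : ∫ z, f z ∂μ ≤ ∫ ω, upperMean T θ E f ω ∂P := by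
  obtain ⟨hprob, hfst, hμE, hinv⟩ := hμ
  obtain ⟨C, hC⟩ := hf.2
  have hb := upperMean_mem_boundedMeasurable P hE hne hS hf
  have hmem : ∀ᵐ z ∂μ, z ∈ E := (prob_compl_eq_zero_iff hE).2 hμE
  calc ∫ z, f z ∂μ
      ≤ ∫ z, limsup (fun n => birkhoffAverage ℝ (skew T θ) f n z) atTop ∂μ :=
        le_integral_limsup_birkhoffAverage ⟨hS, hinv⟩ hf
    _ ≤ ∫ z, upperMean T θ E f z.1 ∂μ :=
        integral_mono_ae (integrable_of_mem_boundedMeasurable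
          (limsup_birkhoffAverage_mem_boundedMeasurable hS hf))
          (integrable_of_mem_boundedMeasurable (comp_mem_boundedMeasurable hb measurable_fst))
          (hmem.mono fun _ => limsup_birkhoffAverage_le_upperMean hC)
    _ = ∫ ω, upperMean T θ E f ω ∂P := by
        rw [← hfst, integral_map measurable_fst.aemeasurable hb.1.aestronglyMeasurable]

end UpperMean

section OrbitCapacity

variable {Ω X : Type*} {T : Ω → X → X} {θ : Ω → Ω} {E : Set (Ω × X)}

lemma orbCount_div_eq_birkhoffAverage (A : Set X) (n : ℕ) (ω : Ω) (x : X) :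
    (orbCount T θ A n ω x : ℝ) / n =
      birkhoffAverage ℝ (skew T θ) ((univ ×ˢ A).indicator 1) n (ω, x) := by
  classical
  rw [orbCount, Nat.card_eq_fintype_card, Fintype.card_subtype, Finset.natCast_card_filter,
    birkhoffAverage, birkhoffSum, smul_eq_mul, inv_mul_eq_div,
    Fin.sum_univ_eq_sum_range fun i => if itr T θ i ω x ∈ A then (1 : ℝ) else 0]
  congr! with i
  simp [iterate_skew, indicator_apply]

lemma bsup_div_eq_fiberSup {ω : Ω} (hne : (fiber E ω).Nonempty) (A : Set X) (n : ℕ) :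
    (bsup T θ E A n ω : ℝ) / n =
      fiberSup E (birkhoffAverage ℝ (skew T θ) ((univ ×ˢ A).indicator 1) n) ω := by
  have hbdd : BddAbove {m | ∃ x ∈ fiber E ω, m = orbCount T θ A n ω x} := by
    refine ⟨n, ?_⟩
    rintro _ ⟨x, -, rfl⟩
    simpa [orbCount] using Finite.card_subtype_le fun i : Fin n => itr T θ (i : ℕ) ω x ∈ A
  have hnonempty : {m | ∃ x ∈ fiber E ω, m = orbCount T θ A n ω x}.Nonempty :=
    let ⟨x, hx⟩ := hne
    ⟨_, x, hx, rfl⟩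
  refine le_antisymm ?_ (fiberSup_le hne fun x hx => ?_)
  · obtain ⟨x, hx, h⟩ := Nat.sSup_mem hnonempty hbdd
    rw [bsup, h, orbCount_div_eq_birkhoffAverage]
    exact le_fiberSup (abs_birkhoffAverage_le (abs_indicator_one_le _) n) hx
  · rw [← orbCount_div_eq_birkhoffAverage]
    gcongr
    exact le_csSup hbdd ⟨x, hx, rfl⟩

lemma ocap_eq_upperMean (hne : ∀ ω, (fiber E ω).Nonempty) (A : Set X) :
    ocap T θ E A = upperMean T θ E ((univ ×ˢ A).indicator 1) := by
  ext ω
  simp only [ocap, upperMean, bsup_div_eq_fiberSup (hne ω)]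

lemma ocap_nonneg {ω : Ω} (hne : (fiber E ω).Nonempty) (A : Set X) :
    0 ≤ ocap T θ E A ω := by
  refine le_limsup_of_frequently_le (Frequently.of_forall fun n => by positivity) ?_
  simp only [bsup_div_eq_fiberSup hne]
  exact (isBoundedUnder_of_abs_le
    (abs_fiberSup_birkhoffAverage_le hne (abs_indicator_one_le _))).1

end OrbitCapacity

section HahnBanach

variable {V : Type*} [AddCommGroup V] [Module ℝ V]

lemma exists_linearMap_eq_of_sublinear (N : V → ℝ)
    (hsmul : ∀ c : ℝ, 0 < c → ∀ x, N (c • x) = c * N x) (hadd : ∀ x y, N (x + y) ≤ N x + N y)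
    (x : V) : ∃ ℓ : V →ₗ[ℝ] ℝ, ℓ x = N x ∧ ∀ y, ℓ y ≤ N y := by
  have hzero : N 0 = 0 := by
    have := hsmul 2 two_pos 0
    rw [smul_zero] at this
    linarith
  have hker (c : ℝ) (hc : c • x = 0) : c • N x = 0 := by
    rcases smul_eq_zero.1 hc with rfl | rfl <;> simp [hzero]
  have hline (c : ℝ) : c * N x ≤ N (c • x) := by
    rcases lt_trichotomy c 0 with hc | rfl | hc
    · have h := hadd (c • x) (-c • x)
      rw [neg_smul, add_neg_cancel, hzero, ← neg_smul, hsmul (-c) (neg_pos.2 hc)] at h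
      linarith
    · simp [hzero]
    · exact (hsmul c hc x).ge
  obtain ⟨ℓ, hℓ, hℓN⟩ := exists_extension_of_le_sublinear
    (LinearPMap.mkSpanSingleton' x (N x) hker : V →ₗ.[ℝ] ℝ) N hsmul hadd fun ⟨y, hy⟩ => by
      obtain ⟨c, rfl⟩ := Submodule.mem_span_singleton.1 hy
      simpa only [LinearPMap.mkSpanSingleton'_apply, RingHom.id_apply, smul_eq_mul] using hline c
  exact ⟨ℓ, (hℓ ⟨x, Submodule.mem_span_singleton_self x⟩).trans
    (LinearPMap.mkSpanSingleton'_apply_self x (N x) hker _), hℓN⟩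

lemma exists_linearMap_eq_of_sublinearOn {W : Submodule ℝ V} {N : V → ℝ}
    (hsmul : ∀ c : ℝ, 0 < c → ∀ x ∈ W, N (c • x) = c * N x)
    (hadd : ∀ x ∈ W, ∀ y ∈ W, N (x + y) ≤ N x + N y) {x : V} (hx : x ∈ W) :
    ∃ ℓ : V →ₗ[ℝ] ℝ, ℓ x = N x ∧ ∀ y ∈ W, ℓ y ≤ N y := by
  obtain ⟨ℓ₀, hx₀, hN₀⟩ := exists_linearMap_eq_of_sublinear (fun y : W => N y)
    (fun c hc y => hsmul c hc y y.2) (fun y z => hadd y y.2 z z.2) ⟨x, hx⟩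
  obtain ⟨ℓ, hℓ⟩ := LinearMap.exists_extend ℓ₀
  have hℓ₀ (y : W) : ℓ y = ℓ₀ y := LinearMap.congr_fun hℓ y
  exact ⟨ℓ, (hℓ₀ ⟨x, hx⟩).trans hx₀, fun y hy => (hℓ₀ ⟨y, hy⟩).trans_le (hN₀ ⟨y, hy⟩)⟩

end HahnBanach

section FiberContinuous

open scoped NNReal BoundedContinuousFunction

lemma measurable_of_forall_boundedContinuousFunction_comp {Y X : Type*} [MeasurableSpace Y]
    [TopologicalSpace X] [HasOuterApproxClosed X] [MeasurableSpace X] [BorelSpace X] {g : Y → X}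
    (hg : ∀ φ : X →ᵇ ℝ≥0, Measurable fun y => (φ (g y) : ℝ)) : Measurable g := by
  refine measurable_of_isClosed' fun F hF _ _ => ?_
  have hF_eq : g ⁻¹' F = ⋂ n, {y | (1 : ℝ) ≤ hF.apprSeq n (g y)} := by
    ext y
    rw [mem_iInter]
    refine ⟨fun hy n => ?_, fun hy => ?_⟩
    · exact mod_cast (HasOuterApproxClosed.apprSeq_apply_eq_one hF n hy).ge
    · have hle : 1 ≤ F.indicator (fun _ => (1 : ℝ≥0)) (g y) :=
        ge_of_tendsto' (tendsto_pi_nhds.1 (HasOuterApproxClosed.tendsto_apprSeq hF) (g y))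
          fun n => mod_cast hy n
      exact mem_of_indicator_ne_zero (s := F) (zero_lt_one.trans_le hle).ne'
  rw [hF_eq]
  exact MeasurableSet.iInter fun n => measurableSet_le measurable_const (hg _)

variable {Ω X : Type*} [TopologicalSpace X]

lemma tendsto_fiberSup_zero {E : Set (Ω × X)} {ω : Ω} {f : ℕ → Ω × X → ℝ} {C : ℝ}
    (hE : IsCompact (fiber E ω)) (hne : (fiber E ω).Nonempty) (hC : ∀ n z, |f n z| ≤ C)
    (hcont : ∀ n, ContinuousOn (fun x => f n (ω, x)) (fiber E ω)) (hanti : Antitone f)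
    (hlim : ∀ z, Tendsto (fun n => f n z) atTop (𝓝 0)) :
    Tendsto (fun n => fiberSup E (f n) ω) atTop (𝓝 0) := by
  have hunif : TendstoUniformlyOn (fun n x => f n (ω, x)) (fun _ => 0) atTop (fiber E ω) :=
    Antitone.tendstoUniformlyOn_of_forall_tendsto hE hcont
      (fun x _ _ _ h => hanti h (ω, x)) continuousOn_const fun x _ => hlim (ω, x)
  have hnonneg (n : ℕ) : 0 ≤ fiberSup E (f n) ω := by
    obtain ⟨x, hx⟩ := hne
    exact (hanti.le_of_tendsto (tendsto_pi_nhds.2 hlim) n (ω, x)).trans (le_fiberSup (hC n) hx)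
  refine tendsto_order.2 ⟨fun a ha => Eventually.of_forall fun n => ha.trans_le (hnonneg n),
    fun a ha => ?_⟩
  filter_upwards [Metric.tendstoUniformlyOn_iff.1 hunif (a / 2) (half_pos ha)] with n hn
  refine (fiberSup_le hne fun x hx => ?_).trans_lt (half_lt_self ha)
  have hdist := hn x hx
  rw [dist_zero_left] at hdist
  exact (le_abs_self _).trans hdist.le

variable [MeasurableSpace Ω] [MeasurableSpace X] {P : Measure Ω} {E : Set (Ω × X)}
  {f : Ω × X → ℝ}

/-- The bounded measurable functions that are continuous on almost every fiber of `E`: the test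
functions against which measures on the bundle are compared. -/
def fiberContinuous (P : Measure Ω) (E : Set (Ω × X)) : Submodule ℝ (Ω × X → ℝ) where
  carrier := {f | f ∈ boundedMeasurable (Ω × X) ∧
    ∀ᵐ ω ∂P, ContinuousOn (fun x => f (ω, x)) (fiber E ω)}
  zero_mem' := ⟨zero_mem _, Eventually.of_forall fun _ => continuousOn_const⟩
  add_mem' := fun hf hg => ⟨add_mem hf.1 hg.1, by
    filter_upwards [hf.2, hg.2] with ω h h' using h.add h'⟩
  smul_mem' := fun c _ hf => ⟨Submodule.smul_mem _ c hf.1, by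
    filter_upwards [hf.2] with ω h using h.const_smul c⟩

lemma supClosed_fiberContinuous : SupClosed (fiberContinuous P E : Set (Ω × X → ℝ)) := by
  rintro f ⟨⟨hfm, C, hC⟩, hfc⟩ g ⟨⟨hgm, D, hD⟩, hgc⟩
  refine ⟨⟨hfm.sup hgm, max C D, fun z => ?_⟩, ?_⟩
  · exact abs_max_le_max_abs_abs.trans (max_le_max (hC z) (hD z))
  · filter_upwards [hfc, hgc] with ω h h' using h.sup h'

lemma comp_fst_mem_fiberContinuous {h : Ω → ℝ} (hh : h ∈ boundedMeasurable Ω) :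
    h ∘ Prod.fst ∈ fiberContinuous P E :=
  ⟨comp_mem_boundedMeasurable hh measurable_fst,
    Eventually.of_forall fun ω => continuousOn_const (c := h ω)⟩

lemma comp_snd_mem_fiberContinuous [OpensMeasurableSpace X] (φ : X →ᵇ ℝ≥0) :
    (fun z => (φ z.2 : ℝ)) ∈ fiberContinuous P E := by
  have hφ : Continuous fun x => (φ x : ℝ) := NNReal.continuous_coe.comp φ.continuous
  refine ⟨⟨hφ.measurable.comp measurable_snd, dist φ 0, fun z => ?_⟩,
    Eventually.of_forall fun _ => hφ.continuousOn⟩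
  simpa [NNReal.dist_eq] using φ.dist_coe_le_dist (g := 0) z.2

lemma one_mem_fiberContinuous : (1 : Ω × X → ℝ) ∈ fiberContinuous P E :=
  comp_fst_mem_fiberContinuous (const_mem_boundedMeasurable 1)

lemma indicator_one_mem_fiberContinuous (hE : MeasurableSet E) :
    E.indicator (1 : Ω × X → ℝ) ∈ fiberContinuous P E :=
  ⟨indicator_one_mem_boundedMeasurable hE, Eventually.of_forall fun ω =>
    (continuousOn_const (c := (1 : ℝ))).congr fun x hx =>
      indicator_of_mem (show (ω, x) ∈ E from hx) 1⟩

lemma comp_skew_mem_fiberContinuous {T : Ω → X → X} {θ : Ω → Ω} (hθ : MeasurePreserving θ P P)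
    (hS : Measurable (skew T θ)) (hT : ∀ᵐ ω ∂P, MapsTo (T ω) (fiber E ω) (fiber E (θ ω)))
    (hTc : ∀ᵐ ω ∂P, ContinuousOn (T ω) (fiber E ω)) (hf : f ∈ fiberContinuous P E) :
    f ∘ skew T θ ∈ fiberContinuous P E := by
  refine ⟨comp_mem_boundedMeasurable hf.1 hS, ?_⟩
  filter_upwards [hT, hTc, hθ.quasiMeasurePreserving.ae hf.2] with ω hmaps hcont hfc
    using hfc.comp hcont hmaps

lemma iSup_comap_fiberContinuous [HasOuterApproxClosed X] [BorelSpace X] (P : Measure Ω)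
    (E : Set (Ω × X)) :
    (Prod.instMeasurableSpace : MeasurableSpace (Ω × X)) =
      ⨆ f ∈ fiberContinuous P E, .comap f inferInstance := by
  refine le_antisymm ?_ (iSup₂_le fun f hf => hf.1.1.comap_le)
  set M : MeasurableSpace (Ω × X) := ⨆ f ∈ fiberContinuous P E, .comap f inferInstance
  have hM {f : Ω × X → ℝ} (hf : f ∈ fiberContinuous P E) : Measurable[M] f :=
    measurable_iff_comap_le.2
      (le_iSup₂ (f := fun f _ => MeasurableSpace.comap f inferInstance) f hf)
  refine sup_le ?_ (measurable_iff_comap_le.1 ?_)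
  · rintro _ ⟨A, hA, rfl⟩
    have hind := hM (comp_fst_mem_fiberContinuous (indicator_one_mem_boundedMeasurable hA))
    convert hind (measurableSet_singleton 1) using 1
    ext z
    by_cases hz : z.1 ∈ A <;> simp [hz]
  · exact @measurable_of_forall_boundedContinuousFunction_comp _ _ M _ _ _ _ _
      fun φ => hM (comp_snd_mem_fiberContinuous φ)

end FiberContinuous

section Representation

variable {Ω X : Type*} [MeasurableSpace Ω] [MeasurableSpace X] {P : Measure Ω} {E : Set (Ω × X)}
  {ℓ : (Ω × X → ℝ) →ₗ[ℝ] ℝ}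

lemma map_le_map_of_le_integral_fiberSup (hne : ∀ ω, (fiber E ω).Nonempty)
    (hℓ : ∀ f ∈ boundedMeasurable (Ω × X), ℓ f ≤ ∫ ω, fiberSup E f ω ∂P) {f g : Ω × X → ℝ}
    (hf : f ∈ boundedMeasurable (Ω × X)) (hg : g ∈ boundedMeasurable (Ω × X))
    (hfg : ∀ z ∈ E, f z ≤ g z) : ℓ f ≤ ℓ g := by
  rw [← sub_nonpos, ← map_sub]
  exact (hℓ _ (sub_mem hf hg)).trans (integral_nonpos fun ω =>
    fiberSup_le (hne ω) fun x hx => sub_nonpos.2 (hfg (ω, x) hx))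

lemma map_comp_fst_eq_integral (hne : ∀ ω, (fiber E ω).Nonempty)
    (hℓ : ∀ f ∈ boundedMeasurable (Ω × X), ℓ f ≤ ∫ ω, fiberSup E f ω ∂P) {h : Ω → ℝ}
    (hh : h ∈ boundedMeasurable Ω) : ℓ (h ∘ Prod.fst) = ∫ ω, h ω ∂P := by
  have hle {h : Ω → ℝ} (hh : h ∈ boundedMeasurable Ω) : ℓ (h ∘ Prod.fst) ≤ ∫ ω, h ω ∂P := by
    refine (hℓ _ (comp_mem_boundedMeasurable hh measurable_fst)).trans_eq
      (integral_congr_ae (ae_of_all _ fun ω => ?_))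
    have : Nonempty (fiber E ω) := (hne ω).to_subtype
    exact ciSup_const (ι := fiber E ω) (a := h ω)
  refine le_antisymm (hle hh) (neg_le_neg_iff.1 ?_)
  rw [← map_neg, ← integral_neg]
  exact hle (neg_mem hh)

variable [TopologicalSpace X] [PolishSpace X] [BorelSpace X] [IsProbabilityMeasure P]
  [P.IsComplete]

lemma tendsto_integral_fiberSup_zero (hE : MeasurableSet E) (hne : ∀ ω, (fiber E ω).Nonempty)
    (hcpt : ∀ ω, IsCompact (fiber E ω)) {f : ℕ → Ω × X → ℝ}
    (hf : ∀ n, f n ∈ fiberContinuous P E) (hanti : Antitone f)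
    (hlim : ∀ z, Tendsto (fun n => f n z) atTop (𝓝 0)) :
    Tendsto (fun n => ∫ ω, fiberSup E (f n) ω ∂P) atTop (𝓝 0) := by
  obtain ⟨C, hC⟩ := (hf 0).1.2
  have hbound (n : ℕ) (z : Ω × X) : |f n z| ≤ C := by
    rw [abs_of_nonneg (hanti.le_of_tendsto (tendsto_pi_nhds.2 hlim) n z)]
    exact (hanti n.zero_le z).trans ((le_abs_self _).trans (hC z))
  rw [← integral_zero Ω ℝ (μ := P)]
  refine tendsto_integral_of_dominated_convergence (fun _ => C)
    (fun n => (fiberSup_mem_boundedMeasurable P hE hne (hf n).1).1.aestronglyMeasurable)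
    (integrable_const C)
    (fun n => Eventually.of_forall fun ω => abs_fiberSup_le (hne ω) (hbound n)) ?_
  filter_upwards [ae_all_iff.2 fun n => (hf n).2] with ω hω
  exact tendsto_fiberSup_zero (hcpt ω) (hne ω) hbound hω hanti hlim

lemma isDaniellIntegral_of_le_integral_fiberSup (hE : MeasurableSet E)
    (hne : ∀ ω, (fiber E ω).Nonempty) (hcpt : ∀ ω, IsCompact (fiber E ω))
    (hℓ : ∀ f ∈ boundedMeasurable (Ω × X), ℓ f ≤ ∫ ω, fiberSup E f ω ∂P) :
    IsDaniellIntegral (fiberContinuous P E) ℓ where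
  nonneg f hf hf0 := by
    rw [← map_zero ℓ]
    exact map_le_map_of_le_integral_fiberSup hne hℓ (zero_mem _) hf.1 fun z _ => hf0 z
  tendsto_zero f hf hanti hlim := by
    refine squeeze_zero (fun n => ?_) (fun n => hℓ _ (hf n).1)
      (tendsto_integral_fiberSup_zero hE hne hcpt hf hanti hlim)
    rw [← map_zero ℓ]
    exact map_le_map_of_le_integral_fiberSup hne hℓ (zero_mem _) (hf n).1 fun z _ =>
      hanti.le_of_tendsto (tendsto_pi_nhds.2 hlim) n z

theorem exists_measure_of_le_integral_fiberSup (hE : MeasurableSet E)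
    (hne : ∀ ω, (fiber E ω).Nonempty) (hcpt : ∀ ω, IsCompact (fiber E ω))
    (hℓ : ∀ f ∈ boundedMeasurable (Ω × X), ℓ f ≤ ∫ ω, fiberSup E f ω ∂P) :
    ∃ μ : Measure (Ω × X), IsProbabilityMeasure μ ∧ μ.map Prod.fst = P ∧ μ E = 1 ∧
      ∀ f ∈ fiberContinuous P E, ∫ z, f z ∂μ = ℓ f := by
  have hdaniell := isDaniellIntegral_of_le_integral_fiberSup hE hne hcpt hℓ
  obtain ⟨μ, hfin, hμ⟩ := hdaniell.exists_measure supClosed_fiberContinuous one_mem_fiberContinuous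
    (iSup_comap_fiberContinuous P E)
  have hfst : μ.map Prod.fst = P := by
    refine Measure.ext fun A hA => ?_
    have hind := indicator_one_mem_boundedMeasurable hA
    rw [← measureReal_eq_measureReal_iff, ← integral_indicator_one hA, ← integral_indicator_one hA,
      integral_map measurable_fst.aemeasurable hind.1.aestronglyMeasurable,
      ← map_comp_fst_eq_integral hne hℓ hind]
    exact (hμ _ (comp_fst_mem_fiberContinuous hind)).2
  have hprob : IsProbabilityMeasure μ := by
    have : IsProbabilityMeasure (μ.map Prod.fst) := hfst ▸ inferInstance
    exact Measure.isProbabilityMeasure_of_map Prod.fst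
  refine ⟨μ, hprob, hfst, ?_, fun f hf => (hμ f hf).2⟩
  have hind := indicator_one_mem_fiberContinuous (P := P) hE
  have h1 := one_mem_fiberContinuous (P := P) (E := E)
  have hone : ∫ z, (1 : Ω × X → ℝ) z ∂μ ≤ ∫ z, E.indicator 1 z ∂μ := by
    rw [(hμ _ h1).2, (hμ _ hind).2]
    exact map_le_map_of_le_integral_fiberSup hne hℓ h1.1 hind.1 fun z hz =>
      (indicator_of_mem hz _).ge
  rw [integral_indicator_one hE] at hone
  rw [← ofReal_measureReal, le_antisymm measureReal_le_one (by simpa using hone),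
    ENNReal.ofReal_one]

end Representation

section InvariantMeasure

open scoped NNReal BoundedContinuousFunction

lemma le_measureReal_of_forall_le_integral {X : Type*} [TopologicalSpace X] [HasOuterApproxClosed X]
    [MeasurableSpace X] [OpensMeasurableSpace X] (ν : Measure X) [IsFiniteMeasure ν] {A : Set X}
    (hA : IsClosed A) {c : ℝ} (hc : ∀ φ : X →ᵇ ℝ≥0, (∀ x ∈ A, φ x = 1) → c ≤ ∫ x, (φ x : ℝ) ∂ν) :
    c ≤ ν.real A := by
  refine ge_of_tendsto' ((ENNReal.tendsto_toReal (measure_ne_top ν A)).comp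
    (HasOuterApproxClosed.tendsto_lintegral_apprSeq hA ν)) fun n => ?_
  rw [Function.comp_apply, BoundedContinuousFunction.toReal_lintegral_coe_eq_integral]
  exact hc _ fun x hx => HasOuterApproxClosed.apprSeq_apply_eq_one hA n hx

variable {Ω X : Type*} [MeasurableSpace Ω] [MeasurableSpace X] {P : Measure Ω} {T : Ω → X → X}
  {θ : Ω → Ω} {E : Set (Ω × X)}

lemma map_comp_skew_eq_of_le_integral_upperMean (hne : ∀ ω, (fiber E ω).Nonempty)
    (hS : Measurable (skew T θ)) {ℓ : (Ω × X → ℝ) →ₗ[ℝ] ℝ}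
    (hℓ : ∀ f ∈ boundedMeasurable (Ω × X), ℓ f ≤ ∫ ω, upperMean T θ E f ω ∂P) {f : Ω × X → ℝ}
    (hf : f ∈ boundedMeasurable (Ω × X)) : ℓ (f ∘ skew T θ) = ℓ f := by
  have hle {f : Ω × X → ℝ} (hf : f ∈ boundedMeasurable (Ω × X)) : ℓ (f ∘ skew T θ) ≤ ℓ f := by
    obtain ⟨C, hC⟩ := hf.2
    rw [← sub_nonpos, ← map_sub]
    exact (hℓ _ (sub_mem (comp_mem_boundedMeasurable hf hS) hf)).trans
      (integral_nonpos fun ω => upperMean_comp_skew_sub_nonpos (hne ω) hC)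
  refine le_antisymm (hle hf) (neg_le_neg_iff.1 ?_)
  rw [← map_neg, ← map_neg]
  exact hle (neg_mem hf)

variable [TopologicalSpace X] [PolishSpace X] [BorelSpace X] [IsProbabilityMeasure P]
  [P.IsComplete]

theorem exists_invariantMeasure_of_le_integral_upperMean (hθ : MeasurePreserving θ P P)
    (hE : MeasurableSet E) (hne : ∀ ω, (fiber E ω).Nonempty) (hcpt : ∀ ω, IsCompact (fiber E ω))
    (hS : Measurable (skew T θ)) (hT : ∀ᵐ ω ∂P, MapsTo (T ω) (fiber E ω) (fiber E (θ ω)))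
    (hTc : ∀ᵐ ω ∂P, ContinuousOn (T ω) (fiber E ω)) {ℓ : (Ω × X → ℝ) →ₗ[ℝ] ℝ}
    (hℓ : ∀ f ∈ boundedMeasurable (Ω × X), ℓ f ≤ ∫ ω, upperMean T θ E f ω ∂P) :
    ∃ μ ∈ invariantMeasures P T θ E, ∀ f ∈ fiberContinuous P E, ∫ z, f z ∂μ = ℓ f := by
  obtain ⟨μ, hprob, hfst, hμE, hμ⟩ := exists_measure_of_le_integral_fiberSup hE hne hcpt
    fun f hf => (hℓ f hf).trans (integral_upperMean_le_integral_fiberSup hE hne hθ hS hT hf)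
  refine ⟨μ, ⟨hprob, hfst, hμE, ?_⟩, hμ⟩
  refine measure_ext_of_forall_integral_eq (supClosed_fiberContinuous (P := P) (E := E))
    one_mem_fiberContinuous (iSup_comap_fiberContinuous P E) fun f hf => ?_
  calc ∫ z, f z ∂μ.map (skew T θ) = ∫ z, (f ∘ skew T θ) z ∂μ :=
        integral_map hS.aemeasurable hf.1.1.aestronglyMeasurable
    _ = ℓ (f ∘ skew T θ) := hμ _ (comp_skew_mem_fiberContinuous hθ hS hT hTc hf)
    _ = ∫ z, f z ∂μ := by
        rw [map_comp_skew_eq_of_le_integral_upperMean hne hS hℓ hf.1, hμ f hf]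

theorem exists_invariantMeasure_integral_upperMean_le (hθ : MeasurePreserving θ P P)
    (hE : MeasurableSet E) (hne : ∀ ω, (fiber E ω).Nonempty) (hcpt : ∀ ω, IsCompact (fiber E ω))
    (hS : Measurable (skew T θ)) (hT : ∀ᵐ ω ∂P, MapsTo (T ω) (fiber E ω) (fiber E (θ ω)))
    (hTc : ∀ᵐ ω ∂P, ContinuousOn (T ω) (fiber E ω)) {A : Set X} (hA : IsClosed A) :
    ∃ μ ∈ invariantMeasures P T θ E,
      ∫ ω, upperMean T θ E ((univ ×ˢ A).indicator 1) ω ∂P ≤ μ.real (univ ×ˢ A) := by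
  have hind : ((univ : Set Ω) ×ˢ A).indicator 1 ∈ boundedMeasurable (Ω × X) :=
    indicator_one_mem_boundedMeasurable (MeasurableSet.univ.prod hA.measurableSet)
  obtain ⟨ℓ, hℓA, hℓ⟩ := exists_linearMap_eq_of_sublinearOn
    (N := fun f => ∫ ω, upperMean T θ E f ω ∂P)
    (fun _ hc _ hf => integral_upperMean_smul hne hf hc.le)
    (fun _ hf _ hg => integral_upperMean_add_le hE hne hS hf hg) hind
  obtain ⟨μ, hμinv, hμ⟩ :=
    exists_invariantMeasure_of_le_integral_upperMean hθ hE hne hcpt hS hT hTc hℓ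
  have := hμinv.1
  refine ⟨μ, hμinv, ?_⟩
  rw [← hℓA, univ_prod, measureReal_def, ← Measure.snd_apply hA.measurableSet, ← measureReal_def]
  refine le_measureReal_of_forall_le_integral μ.snd hA fun φ hφ => ?_
  have hφc := comp_snd_mem_fiberContinuous (P := P) (E := E) φ
  rw [Measure.snd, integral_map measurable_snd.aemeasurable (by fun_prop), hμ _ hφc]
  refine map_le_map_of_le_integral_fiberSup (P := P) hne (fun f hf => (hℓ f hf).trans
    (integral_upperMean_le_integral_fiberSup hE hne hθ hS hT hf)) (univ_prod ▸ hind) hφc.1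
    fun z _ => ?_
  by_cases hz : z.2 ∈ A
  · simp [hz, hφ]
  · simp [hz]

theorem stmt16_general (hθ : MeasurePreserving θ P P) (hE : MeasurableSet E)
    (hne : ∀ ω, (fiber E ω).Nonempty) (hcpt : ∀ ω, IsCompact (fiber E ω))
    (hTm : Measurable fun p : Ω × X => T p.1 p.2)
    (hT : ∀ᵐ ω ∂P, MapsTo (T ω) (fiber E ω) (fiber E (θ ω)))
    (hTc : ∀ᵐ ω ∂P, ContinuousOn (T ω) (fiber E ω)) {A : Set X} (hA : IsClosed A) :
    ∫⁻ ω, ENNReal.ofReal (ocap T θ E A ω) ∂P =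
      ⨆ μ ∈ invariantMeasures P T θ E, μ (univ ×ˢ A) := by
  have hS := measurable_skew hθ.measurable hTm
  have hAm : MeasurableSet ((univ : Set Ω) ×ˢ A) := MeasurableSet.univ.prod hA.measurableSet
  have hind := indicator_one_mem_boundedMeasurable hAm
  have hocap := ocap_eq_upperMean (T := T) (θ := θ) hne A
  rw [← ofReal_integral_eq_lintegral_ofReal (hocap ▸ integrable_upperMean hE hne hS hind)
    (ae_of_all _ fun ω => ocap_nonneg (hne ω) A), hocap]
  refine le_antisymm ?_ (iSup₂_le fun μ hμ => ?_)
  · obtain ⟨μ, hμ, hle⟩ :=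
      exists_invariantMeasure_integral_upperMean_le hθ hE hne hcpt hS hT hTc hA
    have := hμ.1
    refine (ENNReal.ofReal_le_ofReal hle).trans ?_
    rw [ofReal_measureReal]
    exact le_iSup₂ (f := fun (μ : Measure (Ω × X)) _ => μ (univ ×ˢ A)) μ hμ
  · have := hμ.1
    rw [← ofReal_measureReal, ← integral_indicator_one hAm]
    exact ENNReal.ofReal_le_ofReal (integral_le_integral_upperMean hE hne hS hμ hind)

end InvariantMeasure

theorem stmt16
    {Ω X : Type*} [MeasurableSpace Ω]
    (P : MeasureTheory.Measure Ω) [MeasureTheory.IsProbabilityMeasure P] [P.IsComplete]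
    [MetricSpace X] [CompactSpace X] [MeasurableSpace X] [BorelSpace X]
    (θ : Ω → Ω) (hθ : MeasureTheory.MeasurePreserving θ P P)
    (E : Set (Ω × X)) (hE : MeasurableSet E)
    (hEne : ∀ ω, (fiber E ω).Nonempty) (hEcp : ∀ ω, IsCompact (fiber E ω))
    (T : Ω → X → X) (hTm : Measurable fun p : Ω × X => T p.1 p.2)
    (hTmap : ∀ᵐ ω ∂P, Set.MapsTo (T ω) (fiber E ω) (fiber E (θ ω)))
    (hTc : ∀ᵐ ω ∂P, ContinuousOn (T ω) (fiber E ω))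
    (E' : Set X) (hE' : IsClosed E') :
    ∫⁻ ω, ENNReal.ofReal (ocap T θ E E' ω) ∂P =
      ⨆ (μ : MeasureTheory.Measure (Ω × X)) (_ : MeasureTheory.IsProbabilityMeasure μ)
        (_ : μ.map Prod.fst = P) (_ : μ E = 1)
        (_ : μ.map (fun p : Ω × X => (θ p.1, T p.1 p.2)) = μ),
        μ (Set.univ ×ˢ E') := by
  have h := stmt16_general hθ hE hEne hEcp hTm hTmap hTc hE'
  simp only [invariantMeasures, mem_ofPred_eq, iSup_and] at h
  exact h
end
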